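/- arXiv:2003.10069 — 2 statements merged into one kernel-verified Lean document; each statement's English description precedes it below -/
import Mathlib

section
/- There exist absolute constants C, C′ > 0 such that the following holds. Let n ≥ 2, ε ∈ (0,1), fix X₀ ∈ S^{d−1}, let Q_t be an ORA walk of length t on ℝ^d with t ≥ C d (log d)(log n), and set X_t = Q_t X₀. Let k = ⌈C′ ε⁻² log n⌉, assume k ≤ d, and let S be a uniformly random subset of {1,…,d} of size k, independent of the walk. Then P[ Σ_{i∈S} X_t[i]² ∉ [(1−ε)k/d, (1+ε)k/d] ] ≤ n^{−3}. -/
noncomputable section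

open MeasureTheory Real
open scoped ENNReal

namespace KacJL

instance matrixMeasurableSpace {m n : Type*} : MeasurableSpace (Matrix m n ℝ) :=
  inferInstanceAs (MeasurableSpace (m → n → ℝ))

/-- The rotation by angle `θ` in the `(i,j)` coordinate plane of `ℝ^d`. -/
def rotM (d : ℕ) (i j : Fin d) (θ : ℝ) : Matrix (Fin d) (Fin d) ℝ :=
  Matrix.of fun k l =>
    if k = i ∧ l = i then Real.cos θ
    else if k = i ∧ l = j then -Real.sin θ
    else if k = j ∧ l = i then Real.sin θ
    else if k = j ∧ l = j then Real.cos θ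
    else if k = l then 1 else 0

/-- The uniform distribution on pairs of distinct coordinates in `Fin d`. -/
def pairUniform (d : ℕ) : Measure (Fin d × Fin d) :=
  ((d * (d - 1) : ℕ) : ℝ≥0∞)⁻¹ •
    (Measure.count.restrict {p : Fin d × Fin d | p.1 ≠ p.2})

/-- The product `R_{i_T,j_T,π/4} ⋯ R_{i_1,j_1,π/4}` of ORA rotations determined by the
pairs `ω`. -/
def oraMatrix {d T : ℕ} (ω : Fin T → Fin d × Fin d) : Matrix (Fin d) (Fin d) ℝ :=
  ((List.ofFn fun t => rotM d (ω t).1 (ω t).2 (Real.pi / 4)).reverse).prod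

instance finsetMeasurableSpace {α : Type*} : MeasurableSpace (Finset α) := ⊤

/-- The uniform distribution on `k`-element subsets of `Fin d`. -/
def subsetUniform (d k : ℕ) : Measure (Finset (Fin d)) :=
  ((d.choose k : ℕ) : ℝ≥0∞)⁻¹ •
    (Measure.count.restrict {A : Finset (Fin d) | A.card = k})

/-- double factorial weights -/
def phi (p : ℕ) : ℝ := ((2 * p).factorial : ℝ) / (2 ^ p * (p.factorial : ℝ))

lemma phi_pos (p : ℕ) : 0 < phi p := by
  unfold phi; positivity

lemma phi_zero : phi 0 = 1 := by simp [phi]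

lemma phi_one : phi 1 = 1 := by norm_num [phi, Nat.factorial]

lemma phi_choose (p c : ℕ) (h : c ≤ p) :
    ((2 * p).choose (2 * c) : ℝ) * (phi c * phi (p - c)) = (p.choose c : ℝ) * phi p := by
  unfold phi
  rw [Nat.cast_choose ℝ h, Nat.cast_choose ℝ (by omega : 2 * c ≤ 2 * p)]
  have : 2 * p - 2 * c = 2 * (p - c) := by omega
  rw [this]
  have e : (2:ℝ) ^ p = 2 ^ c * 2 ^ (p - c) := by rw [← pow_add]; congr 1; omega
  rw [e]
  field_simp

lemma phi_le (p : ℕ) : phi p ≤ 2 ^ p * (p.factorial : ℝ) := by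
  unfold phi
  rw [div_le_iff₀ (by positivity)]
  have h1 := Nat.centralBinom_eq_two_mul_choose p
  have h2 : ((2 * p).choose p : ℝ) ≤ 2 ^ (2 * p) := by
    exact_mod_cast Nat.choose_le_two_pow (2 * p) p
  rw [Nat.cast_choose ℝ (by omega : p ≤ 2 * p)] at h2
  have : 2 * p - p = p := by omega
  rw [this, div_le_iff₀ (by positivity)] at h2
  calc _ ≤ _ := h2
    _ = _ := by ring

lemma phi_ge_one (p : ℕ) : 1 ≤ phi p := by
  induction p with
  | zero => simp [phi]
  | succ n ih =>
    have : phi (n + 1) = (2 * n + 1) * phi n := by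
      unfold phi
      rw [show 2 * (n + 1) = 2 * n + 1 + 1 by ring, Nat.factorial_succ, Nat.factorial_succ,
        Nat.factorial_succ, pow_succ]
      push_cast
      field_simp
      ring
    rw [this]
    have : (1:ℝ) ≤ 2 * n + 1 := by linarith [Nat.cast_nonneg (α := ℝ) n]
    nlinarith

lemma choose_sq_le (s c : ℕ) : s.choose c ^ 2 ≤ (2 * s).choose (2 * c) := by
  rw [two_mul, Nat.add_choose_eq]
  have := Finset.single_le_sum (f := fun ij : ℕ × ℕ => s.choose ij.1 * s.choose ij.2)
    (s := Finset.HasAntidiagonal.antidiagonal (2 * c)) (fun _ _ => Nat.zero_le _) (a := (c, c))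
    (by simp [two_mul])
  simpa [sq] using this

lemma phi_conv (s c : ℕ) (h : c ≤ s) : (s.choose c : ℝ) * (phi c * phi (s - c)) ≤ phi s := by
  have h1 := phi_choose s c h
  have h2 : ((s.choose c : ℝ)) ^ 2 ≤ ((2 * s).choose (2 * c) : ℝ) := by
    exact_mod_cast choose_sq_le s c
  have h3 : (0:ℝ) < s.choose c := by exact_mod_cast Nat.choose_pos h
  have h4 := mul_pos (phi_pos c) (phi_pos (s - c))
  have : (s.choose c : ℝ) * ((s.choose c : ℝ) * (phi c * phi (s - c))) ≤ (s.choose c : ℝ) * phi s := by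
    rw [← h1]; nlinarith
  exact le_of_mul_le_mul_left this h3

lemma fact_stirling (p : ℕ) (hp : 1 ≤ p) : (p.factorial : ℝ) =
    Stirling.stirlingSeq p * (Real.sqrt (2 * p) * (p / Real.exp 1) ^ p) := by
  unfold Stirling.stirlingSeq
  have : (0:ℝ) < p := by exact_mod_cast hp
  field_simp

lemma stirling_bounds (p : ℕ) (hp : 1 ≤ p) :
    Real.sqrt Real.pi ≤ Stirling.stirlingSeq p ∧ Stirling.stirlingSeq p ≤ Real.exp 1 / Real.sqrt 2 := by
  refine ⟨Stirling.sqrt_pi_le_stirlingSeq (by omega), ?_⟩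
  obtain ⟨k, rfl⟩ : ∃ k, p = k + 1 := ⟨p - 1, by omega⟩
  have := Stirling.stirlingSeq'_antitone (Nat.zero_le k)
  simpa using this

lemma phi_stirling (p : ℕ) (hp : 1 ≤ p) : ∃ g : ℝ, 1 ≤ g ∧ g ≤ 2 ∧
    phi p = g * (2 * p / Real.exp 1) ^ p := by
  obtain ⟨a1, a2⟩ := stirling_bounds p hp
  obtain ⟨b1, b2⟩ := stirling_bounds (2 * p) (by omega)
  have hpi : 0 < Real.sqrt Real.pi := Real.sqrt_pos.2 Real.pi_pos
  have h2 : (0:ℝ) < Real.sqrt 2 := by positivity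
  have h22 : Real.sqrt 2 * Real.sqrt 2 = 2 := Real.mul_self_sqrt (by norm_num)
  have hpp : Real.sqrt Real.pi * Real.sqrt Real.pi = Real.pi := Real.mul_self_sqrt Real.pi_pos.le
  have he := Real.exp_one_lt_d9
  have hpi3 := Real.pi_gt_three
  have hep := Real.exp_pos 1
  have hp0 : (0:ℝ) < p := by exact_mod_cast hp
  have ha : 0 < Stirling.stirlingSeq p := by linarith
  have hb1 : Real.sqrt 2 * Stirling.stirlingSeq (2 * p) ≤ Real.exp 1 := by
    rw [le_div_iff₀ h2] at b2; linarith
  have ha1 : Real.sqrt 2 * Stirling.stirlingSeq p ≤ Real.exp 1 := by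
    rw [le_div_iff₀ h2] at a2; linarith
  have hs1 : (1.7:ℝ) ≤ Real.sqrt Real.pi := Real.le_sqrt_of_sq_le (by nlinarith)
  refine ⟨Real.sqrt 2 * Stirling.stirlingSeq (2 * p) / Stirling.stirlingSeq p, ?_, ?_, ?_⟩
  · rw [le_div_iff₀ ha, one_mul]
    have : Real.sqrt 2 * Stirling.stirlingSeq p ≤ Real.sqrt 2 * (Real.sqrt 2 * Stirling.stirlingSeq (2 * p)) := by
      calc _ ≤ Real.exp 1 := ha1
        _ ≤ 2 * Real.sqrt Real.pi := by linarith
        _ ≤ 2 * Stirling.stirlingSeq (2*p) := by linarith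
        _ = _ := by rw [← mul_assoc, h22]
    exact le_of_mul_le_mul_left this h2
  · rw [div_le_iff₀ ha]; linarith
  · unfold phi
    rw [fact_stirling p hp, fact_stirling (2 * p) (by omega)]
    have e1 : Real.sqrt (2 * (2 * p : ℕ)) = Real.sqrt 2 * Real.sqrt (2 * p) := by
      rw [← Real.sqrt_mul (by norm_num)]; push_cast; ring_nf
    rw [e1]
    have h3 : 0 < Real.sqrt (2 * p) := by positivity
    push_cast
    rw [two_mul p, pow_add]
    simp only [div_pow, mul_pow]
    field_simp

lemma phi_beta (a b : ℕ) (ha : 1 ≤ a) (hb : 1 ≤ b) :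
    (a:ℝ) ^ a * (b:ℝ) ^ b * phi (a + b) ≤ ((a + b : ℕ) : ℝ) ^ (a + b) * (2 * (phi a * phi b)) := by
  obtain ⟨ga, a1, a2, ea⟩ := phi_stirling a ha
  obtain ⟨gb, b1, b2, eb⟩ := phi_stirling b hb
  obtain ⟨gs, s1, s2, es⟩ := phi_stirling (a + b) (by omega)
  rw [ea, eb, es]
  have e1 : (a:ℝ) ^ a * (b:ℝ) ^ b * (gs * (2 * ((a + b : ℕ):ℝ) / Real.exp 1) ^ (a + b)) =
    gs * ((2 / Real.exp 1) ^ (a + b) * (a:ℝ) ^ a * (b:ℝ) ^ b * ((a + b : ℕ):ℝ)^(a + b)) := by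
    rw [mul_div_right_comm, mul_pow]; ring
  have e2 : ((a + b : ℕ) : ℝ) ^ (a + b) * (2 * (ga * (2 * (a:ℝ) / Real.exp 1) ^ a * (gb * (2 * (b:ℝ) / Real.exp 1) ^ b)))
     = 2 * (ga * gb) * ((2 / Real.exp 1) ^ (a + b) * (a:ℝ) ^ a * (b:ℝ) ^ b * ((a + b : ℕ):ℝ)^(a + b)) := by
    rw [mul_div_right_comm, mul_pow, mul_div_right_comm, mul_pow, pow_add (2 / Real.exp 1)]; ring
  rw [e1, e2]
  apply mul_le_mul_of_nonneg_right _ (by positivity)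
  nlinarith

/-- site weights -/
def wt (d p : ℕ) : ℝ := if p = 0 then 1 else (1 / 4) * (8 / d) ^ p * phi p

lemma wt_zero (d : ℕ) : wt d 0 = 1 := by simp [wt]

lemma wt_pos (d p : ℕ) (hd : 0 < d) : 0 < wt d p := by
  unfold wt
  have := phi_pos p
  split_ifs <;> positivity

lemma wt_single (d p : ℕ) (hd : 0 < d) (hp : 2 ≤ p) :
    ∑ c ∈ Finset.range (p + 1), ((2 * p).choose (2 * c) : ℝ) / 2 ^ p * (wt d c * wt d (p - c)) ≤
      3 / 4 * wt d p := by
  have key : ∀ c ∈ Finset.range (p + 1),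
     ((2 * p).choose (2 * c) : ℝ) / 2 ^ p * (wt d c * wt d (p - c)) ≤
      (if c = 0 then 1 / 2 ^ p * wt d p else 0) + (if c = p then 1 / 2 ^ p * wt d p else 0) +
       (p.choose c : ℝ) / 2 ^ p * (1 / 4 * wt d p) := by
    intro c hc
    have hc' : c ≤ p := by simpa [Nat.lt_succ_iff] using hc
    have hw := wt_pos d p hd
    rcases Nat.eq_zero_or_pos c with rfl | hc0
    · have : (0:ℝ) ≤ (p.choose 0 : ℝ) / 2 ^ p * (1 / 4 * wt d p) := by positivity
      have h0 : ¬ (0 = p) := by omega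
      simp [wt_zero, h0] at this ⊢
      linarith
    rcases Nat.eq_or_lt_of_le hc' with rfl | hlt
    · have : (0:ℝ) ≤ (c.choose c : ℝ) / 2 ^ c * (1 / 4 * wt d c) := by positivity
      have h0 : ¬ (c = 0) := by omega
      simp [wt_zero, h0] at this ⊢
      linarith
    · have h0 : c ≠ 0 := by omega
      have h1 : c ≠ p := by omega
      have h2 : p - c ≠ 0 := by omega
      have h3 : p ≠ 0 := by omega
      simp only [h0, h1, if_false, wt, h2, h3, zero_add]
      have := phi_choose p c hc'
      have e : ((8:ℝ)/d) ^ p = (8 / d) ^ c * (8 / d) ^ (p - c) := by rw [← pow_add]; congr 1; omega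
      rw [e]
      apply le_of_eq
      calc _ = ((8:ℝ) / d) ^ c * (8 / d) ^ (p - c) / 2 ^ p / 16 * (((2 * p).choose (2 * c) : ℝ) * (phi c * phi (p - c))) := by ring
        _ = _ := by rw [this]; ring
  refine (Finset.sum_le_sum key).trans ?_
  rw [Finset.sum_add_distrib, Finset.sum_add_distrib, Finset.sum_ite_eq', Finset.sum_ite_eq',
    ← Finset.sum_mul, ← Finset.sum_div]
  have : ∑ i ∈ Finset.range (p + 1), (p.choose i : ℝ) = 2 ^ p := by
    exact_mod_cast Nat.sum_range_choose p
  rw [this]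
  simp only [Finset.mem_range, Nat.succ_pos, Nat.lt_succ_self, if_true]
  have hw := wt_pos d p hd
  have h2 : (1:ℝ) / 2 ^ p ≤ 1 / 4 := by
    apply one_div_le_one_div_of_le (by norm_num)
    calc (4:ℝ) = 2 ^ 2 := by norm_num
      _ ≤ 2 ^ p := pow_le_pow_right₀ (by norm_num) hp
  rw [div_self (by positivity)]
  nlinarith

lemma wt_double (d a b : ℕ) (hd : 0 < d) (ha : 1 ≤ a) (hb : 1 ≤ b) :
    ∑ c ∈ Finset.range (a + b + 1), ((a + b).choose c : ℝ) * ((a:ℝ) ^ a * (b:ℝ) ^ b / ((a + b : ℕ):ℝ) ^ (a + b))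
      * (wt d c * wt d (a + b - c)) ≤ (16 + 2 * a + 2 * b) * (wt d a * wt d b) := by
  set s := a + b with hs
  have hs0 : s ≠ 0 := by omega
  have ha0 : a ≠ 0 := by omega
  have hb0 : b ≠ 0 := by omega
  have hd' : (0:ℝ) < d := by exact_mod_cast hd
  have key : ∀ c ∈ Finset.range (s + 1), ((s).choose c : ℝ) * (wt d c * wt d (s - c)) ≤
      (if c = 0 then (1 / 4) * (8 / d) ^ s * phi s else 0) +
      (if c = s then (1 / 4) * (8 / d) ^ s * phi s else 0) + (if c = 0 then 0 else (1 / 16) * (8 / d) ^ s * phi s) := by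
    intro c hc
    have hc' : c ≤ s := by simpa [Nat.lt_succ_iff] using hc
    have hp := phi_pos s
    rcases Nat.eq_zero_or_pos c with rfl | hc0
    · simp [wt_zero, hs0.symm]; simp [wt, hs0]
    rcases Nat.eq_or_lt_of_le hc' with rfl | hlt
    · simp [wt_zero, hs0]; simp [wt, hs0]; positivity
    · have h0 : c ≠ 0 := by omega
      have h1 : c ≠ s := by omega
      have h2 : s - c ≠ 0 := by omega
      simp only [h0, h1, if_false, wt, h2, zero_add]
      have := phi_conv s c hc'
      have e : ((8:ℝ)/d) ^ s = (8 / d) ^ c * (8 / d) ^ (s - c) := by rw [← pow_add]; congr 1; omega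
      rw [e]
      calc _ = 1 / 16 * (((8:ℝ) / d) ^ c * (8 / d) ^ (s - c)) * ((s.choose c : ℝ) * (phi c * phi (s - c))) := by ring
        _ ≤ _ := by gcongr
  have h1 : ∑ c ∈ Finset.range (s + 1), ((s).choose c : ℝ) * (wt d c * wt d (s - c)) ≤
     (1 / 16) * (8 / d) ^ s * phi s * (8 + s) := by
    refine (Finset.sum_le_sum key).trans ?_
    rw [Finset.sum_add_distrib, Finset.sum_add_distrib, Finset.sum_ite_eq', Finset.sum_ite_eq',
      Finset.sum_range_succ']
    simp
    apply le_of_eq; ring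
  have h2 := phi_beta a b ha hb
  rw [← hs] at h2
  have h3 : (0:ℝ) < (s:ℝ) ^ s := by positivity
  have h4 : (a:ℝ) ^ a * (b:ℝ) ^ b / (s:ℝ) ^ s * phi s ≤ 2 * (phi a * phi b) := by
    rw [div_mul_eq_mul_div, div_le_iff₀ h3]; linarith
  calc _ = ((a:ℝ) ^ a * (b:ℝ) ^ b / (s:ℝ) ^ s) * ∑ c ∈ Finset.range (s + 1), ((s).choose c : ℝ) * (wt d c * wt d (s - c)) := by
        rw [Finset.mul_sum]; apply Finset.sum_congr rfl; intros; ring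
    _ ≤ ((a:ℝ) ^ a * (b:ℝ) ^ b / (s:ℝ) ^ s) * ((1 / 16) * (8 / d) ^ s * phi s * (8 + s)) := by gcongr
    _ = (1 / 16) * (8 / d) ^ s * (8 + s) * ((a:ℝ) ^ a * (b:ℝ) ^ b / (s:ℝ) ^ s * phi s) := by ring
    _ ≤ (1 / 16) * (8 / d) ^ s * (8 + s) * (2 * (phi a * phi b)) := by gcongr
    _ = _ := by
      simp only [wt, ha0, hb0, if_false]
      rw [hs, pow_add]; push_cast; ring

lemma amgm_pow (a b : ℕ) (ha : 1 ≤ a) (hb : 1 ≤ b) (u v : ℝ) (hu : 0 ≤ u) (hv : 0 ≤ v) :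
    u ^ a * v ^ b ≤ (a:ℝ) ^ a * (b:ℝ) ^ b / ((a + b : ℕ):ℝ) ^ (a + b) * (u + v) ^ (a + b) := by
  have ha' : (0:ℝ) < a := by exact_mod_cast ha
  have hb' : (0:ℝ) < b := by exact_mod_cast hb
  have hs : (0:ℝ) < a + b := by positivity
  have h := Real.geom_mean_le_arith_mean2_weighted (w₁ := a / (a + b)) (w₂ := b / (a + b))
    (p₁ := u / a) (p₂ := v / b) (by positivity) (by positivity) (by positivity) (by positivity)
    (by field_simp)
  have h2 := pow_le_pow_left₀ (by positivity) h (a + b)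
  rw [mul_pow, ← Real.rpow_mul_natCast (by positivity), ← Real.rpow_mul_natCast (by positivity)] at h2
  have e1 : (a:ℝ) / (a + b) * ((a + b : ℕ) : ℝ) = a := by push_cast; field_simp
  have e2 : (b:ℝ) / (a + b) * ((a + b : ℕ) : ℝ) = b := by push_cast; field_simp
  rw [e1, e2, Real.rpow_natCast, Real.rpow_natCast] at h2
  have e3 : (a:ℝ) / (a + b) * (u / a) + b / (a + b) * (v / b) = (u + v) / (a + b) := by field_simp
  rw [e3, div_pow, div_pow, div_pow] at h2
  push_cast
  calc u ^ a * v ^ b = (a:ℝ) ^ a * (b:ℝ) ^ b * (u ^ a / (a:ℝ) ^ a * (v ^ b / (b:ℝ) ^ b)) := by field_simp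
    _ ≤ (a:ℝ) ^ a * (b:ℝ) ^ b * ((u + v) ^ (a + b) / (a + b) ^ (a + b)) := by gcongr
    _ = _ := by ring

section Dyn
variable {d : ℕ}

lemma rot_apply (i j : Fin d) (hij : i ≠ j) (x : Fin d → ℝ) (l : Fin d) :
    (rotM d i j (Real.pi / 4)).mulVec x l =
      if l = i then (x i - x j) / Real.sqrt 2 else if l = j then (x i + x j) / Real.sqrt 2 else x l := by
  have h2 : Real.sqrt 2 / 2 = 1 / Real.sqrt 2 := by
    rw [div_eq_div_iff (by norm_num) (by positivity)]; simp
  simp only [Matrix.mulVec, dotProduct, rotM, Matrix.of_apply, Real.cos_pi_div_four,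
    Real.sin_pi_div_four]
  by_cases hli : l = i
  · subst hli
    rw [Finset.sum_eq_add l j hij]
    · simp [hij, hij.symm, h2]; ring
    · intro c _ hc
      simp [hc.1, hc.2, hij, Ne.symm hc.1]
    · simp
    · simp
  · by_cases hlj : l = j
    · subst hlj
      rw [Finset.sum_eq_add i l hij]
      · simp [hij, hij.symm, h2]; ring
      · intro c _ hc
        simp [hc.1, hc.2, hij.symm, Ne.symm hc.2]
      · simp
      · simp
    · simp [hli, hlj]

/-- monomial in squares -/
def mon (α : Fin d → ℕ) (y : Fin d → ℝ) : ℝ := ∏ l, (y l ^ 2) ^ α l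

/-- symmetrised monomial -/
def fsym (α : Fin d → ℕ) (x : Fin d → ℝ) : ℝ := ∑ σ : Equiv.Perm (Fin d), mon α (x ∘ σ)

/-- change exponents at two places -/
def upd (α : Fin d → ℕ) (i j : Fin d) (c e : ℕ) : Fin d → ℕ :=
  Function.update (Function.update α i c) j e

lemma prod_split {M : Type*} [CommMonoid M] (i j : Fin d) (hij : i ≠ j) (g : Fin d → M) :
    ∏ l, g l = g i * g j * ∏ l ∈ Finset.univ \ {i, j}, g l := by
  rw [← Finset.prod_sdiff (Finset.subset_univ ({i, j} : Finset (Fin d))), Finset.prod_pair hij,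
    mul_comm]

lemma prod_upd {M : Type*} [CommMonoid M] (i j : Fin d) (hij : i ≠ j) (α : Fin d → ℕ) (c e : ℕ)
    (g : Fin d → ℕ → M) :
    ∏ l, g l (upd α i j c e l) = g i c * g j e * ∏ l ∈ Finset.univ \ {i, j}, g l (α l) := by
  rw [prod_split i j hij]
  congr 1
  · simp [upd, hij]
  · apply Finset.prod_congr rfl
    intro l hl
    simp at hl
    simp [upd, hl.1, hl.2]

lemma sum_upd (i j : Fin d) (hij : i ≠ j) (α : Fin d → ℕ) (c : ℕ) (hc : c ≤ α i + α j) :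
    ∑ l, upd α i j c (α i + α j - c) l = ∑ l, α l := by
  have h1 := prod_upd (M := Multiplicative ℕ) i j hij α c (α i + α j - c) (fun _ n => Multiplicative.ofAdd n)
  have h2 := prod_split (M := Multiplicative ℕ) i j hij (fun l => Multiplicative.ofAdd (α l))
  simp only [← ofAdd_sum, ← ofAdd_add, EmbeddingLike.apply_eq_iff_eq] at h1 h2
  omega

lemma mon_nonneg (α : Fin d → ℕ) (y : Fin d → ℝ) : 0 ≤ mon α y :=
  Finset.prod_nonneg fun _ _ => by positivity

/-- transition coefficients -/
def kc (a b c : ℕ) : ℝ :=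
  if a = 0 ∨ b = 0 then ((2 * (a + b)).choose (2 * c) : ℝ) / 2 ^ (a + b)
  else ((a + b).choose c : ℝ) * ((a:ℝ) ^ a * (b:ℝ) ^ b / ((a + b : ℕ):ℝ) ^ (a + b))

lemma kc_nonneg (a b c : ℕ) : 0 ≤ kc a b c := by
  unfold kc; split_ifs <;> positivity

/-- growth ratio bound -/
def rr (a b : ℕ) : ℝ := 1 - (1 / 4) * ((if a = 0 then 0 else 1) + (if b = 0 then 0 else 1)) +
  (if a = 0 then 0 else 1) * (if b = 0 then 0 else 1) * (16 + 2 * a + 2 * b)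

lemma kc_wt (a b : ℕ) (hd : 0 < d) (ha : a ≠ 1) (hb : b ≠ 1) :
    ∑ c ∈ Finset.range (a + b + 1), kc a b c * (wt d c * wt d (a + b - c)) ≤
      rr a b * (wt d a * wt d b) := by
  rcases Nat.eq_zero_or_pos a with rfl | ha0
  · rcases Nat.eq_zero_or_pos b with rfl | hb0
    · simp [kc, rr, wt_zero]
    · have := wt_single d b hd (by omega)
      have hb1 : b ≠ 0 := by omega
      simp only [kc, rr, wt_zero, zero_add, true_or, if_true, hb1, if_false]
      refine this.trans (le_of_eq ?_)
      ring
  · rcases Nat.eq_zero_or_pos b with rfl | hb0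
    · have := wt_single d a hd (by omega)
      have hb1 : a ≠ 0 := by omega
      simp only [kc, rr, wt_zero, add_zero, or_true, if_true, hb1, if_false]
      refine this.trans (le_of_eq ?_)
      ring
    · have := wt_double d a b hd ha0 hb0
      have ha1 : a ≠ 0 := by omega
      have hb1 : b ≠ 0 := by omega
      simp only [kc, rr, ha1, hb1, or_self, if_false]
      refine this.trans ?_
      have := mul_pos (wt_pos d a hd) (wt_pos d b hd)
      apply mul_le_mul_of_nonneg_right _ this.le
      linarith

lemma even_binom (p : ℕ) (x y : ℝ) :
    (x - y) ^ (2 * p) + (x + y) ^ (2 * p) =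
      2 * ∑ c ∈ Finset.range (p + 1), ((2 * p).choose (2 * c) : ℝ) * ((x ^ 2) ^ c * (y ^ 2) ^ (p - c)) := by
  have h1 : ∀ y : ℝ, (x + y) ^ (2 * p) = ∑ m ∈ Finset.range (2 * p + 1), x ^ m * y ^ (2 * p - m) * ((2 * p).choose m : ℝ) :=
    fun y => add_pow x y (2 * p)
  rw [sub_eq_add_neg, h1, h1, ← Finset.sum_add_distrib, Finset.mul_sum]
  symm
  apply Finset.sum_of_injOn (fun c => 2 * c)
  · intro a _ b _ h; simpa using h
  · intro c hc; simp at hc ⊢; omega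
  · intro m hm hm2
    have : Odd m := by
      rw [← Nat.not_even_iff_odd]
      rintro ⟨r, rfl⟩
      apply hm2
      simp at hm ⊢
      refine ⟨r, by omega, by omega⟩
    have h3 : Odd (2 * p - m) := by
      simp at hm
      obtain ⟨r, rfl⟩ := this
      exact ⟨p - r - 1, by omega⟩
    rw [h3.neg_pow]; ring
  · intro c hc
    have h3 : Even (2 * p - 2 * c) := ⟨p - c, by omega⟩
    rw [h3.neg_pow, ← pow_mul, ← pow_mul, show 2 * p - 2 * c = 2 * (p - c) by omega]
    ring

lemma mon_pair (i j : Fin d) (hij : i ≠ j) (α : Fin d → ℕ) (y : Fin d → ℝ) :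
    mon α ((rotM d i j (Real.pi / 4)).mulVec y) + mon α ((rotM d j i (Real.pi / 4)).mulVec y) ≤
      2 * ∑ c ∈ Finset.range (α i + α j + 1), kc (α i) (α j) c * mon (upd α i j c (α i + α j - c)) y := by
  have hrest : ∀ z : Fin d → ℝ, (∀ l, l ≠ i → l ≠ j → z l = y l) →
      mon α z = (z i ^ 2) ^ α i * (z j ^ 2) ^ α j * ∏ l ∈ Finset.univ \ {i, j}, (y l ^ 2) ^ α l := by
    intro z hz
    unfold mon
    rw [prod_split i j hij]
    congr 1
    apply Finset.prod_congr rfl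
    intro l hl
    simp at hl
    rw [hz l hl.1 hl.2]
  rw [hrest ((rotM d i j (Real.pi / 4)).mulVec y), hrest ((rotM d j i (Real.pi / 4)).mulVec y)]
  rotate_left
  · intro l h1 h2; rw [rot_apply j i hij.symm]; simp [h1, h2]
  · intro l h1 h2; rw [rot_apply i j hij]; simp [h1, h2]
  rw [rot_apply i j hij, rot_apply i j hij, rot_apply j i hij.symm, rot_apply j i hij.symm]
  simp only [if_true, hij, hij.symm, if_false]
  have hm : ∀ c e, mon (upd α i j c e) y = (y i ^ 2) ^ c * (y j ^ 2) ^ e *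
     ∏ l ∈ Finset.univ \ {i, j}, (y l ^ 2) ^ α l := by
    intro c e
    exact prod_upd i j hij α c e (fun l n => (y l ^ 2) ^ n)
  simp only [hm]
  set Rr := ∏ l ∈ Finset.univ \ {i, j}, (y l ^ 2) ^ α l with hR
  have hR0 : 0 ≤ Rr := Finset.prod_nonneg fun _ _ => by positivity
  have h2 : Real.sqrt 2 ^ 2 = 2 := Real.sq_sqrt (by norm_num)
  simp only [div_pow, h2]
  generalize α i = a
  generalize α j = b
  generalize y i = u
  generalize y j = v
  have goal2 : ((u - v) ^ 2) ^ a / 2 ^ a * (((u + v) ^ 2) ^ b / 2 ^ b) +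
      ((v + u) ^ 2) ^ a / 2 ^ a * (((v - u) ^ 2) ^ b / 2 ^ b) ≤
      2 * ∑ c ∈ Finset.range (a + b + 1), kc a b c * ((u ^ 2) ^ c * (v ^ 2) ^ (a + b - c)) := by
    by_cases hab : a = 0 ∨ b = 0
    · apply le_of_eq
      simp only [kc, hab, if_true]
      have e := even_binom (a + b) u v
      have : 2 * ∑ c ∈ Finset.range (a + b + 1), ((2 * (a + b)).choose (2 * c) : ℝ) / 2 ^ (a + b) * ((u ^ 2) ^ c * (v ^ 2) ^ (a + b - c))
        = ((u - v) ^ (2 * (a + b)) + (u + v) ^ (2 * (a + b))) / 2 ^ (a + b) := by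
        rw [e, mul_div_assoc, Finset.sum_div]
        congr 1
        apply Finset.sum_congr rfl; intros; ring
      rw [this]
      have hvu : (v - u) ^ 2 = (u - v) ^ 2 := by ring
      rw [hvu, add_comm v u]
      rcases hab with rfl | rfl
      · simp [← pow_mul]; ring
      · simp [← pow_mul]; ring
    · have ha : 1 ≤ a := by omega
      have hb : 1 ≤ b := by omega
      simp only [kc, hab, if_false]
      have h3 := amgm_pow a b ha hb ((u - v) ^ 2 / 2) ((u + v) ^ 2 / 2) (by positivity) (by positivity)
      have h4 := amgm_pow a b ha hb ((v + u) ^ 2 / 2) ((v - u) ^ 2 / 2) (by positivity) (by positivity)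
      rw [show (u - v) ^ 2 / 2 + (u + v) ^ 2 / 2 = u ^ 2 + v ^ 2 by ring] at h3
      rw [show (v + u) ^ 2 / 2 + (v - u) ^ 2 / 2 = u ^ 2 + v ^ 2 by ring] at h4
      rw [div_pow, div_pow, add_pow (u ^ 2) (v ^ 2), Finset.mul_sum] at h3 h4
      have : ∑ c ∈ Finset.range (a + b + 1), ((a + b).choose c : ℝ) * ((a:ℝ) ^ a * (b:ℝ) ^ b / ((a + b : ℕ):ℝ) ^ (a + b)) * ((u ^ 2) ^ c * (v ^ 2) ^ (a + b - c))
       = ∑ c ∈ Finset.range (a + b + 1), (a:ℝ) ^ a * (b:ℝ) ^ b / ((a + b : ℕ):ℝ) ^ (a + b) * ((u ^ 2) ^ c * (v ^ 2) ^ (a + b - c) * ((a + b).choose c : ℝ)) := by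
        apply Finset.sum_congr rfl; intros; ring
      rw [this]
      linarith
  calc _ = (((u - v) ^ 2) ^ a / 2 ^ a * (((u + v) ^ 2) ^ b / 2 ^ b) +
      ((v + u) ^ 2) ^ a / 2 ^ a * (((v - u) ^ 2) ^ b / 2 ^ b)) * Rr := by ring
    _ ≤ (2 * ∑ c ∈ Finset.range (a + b + 1), kc a b c * ((u ^ 2) ^ c * (v ^ 2) ^ (a + b - c))) * Rr := by gcongr
    _ = _ := by
      rw [mul_assoc, Finset.sum_mul]; congr 1
      apply Finset.sum_congr rfl; intros; ring

lemma rot_perm (i j : Fin d) (hij : i ≠ j) (x : Fin d → ℝ) (σ : Equiv.Perm (Fin d)) :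
    ((rotM d (σ i) (σ j) (Real.pi / 4)).mulVec x) ∘ σ = (rotM d i j (Real.pi / 4)).mulVec (x ∘ σ) := by
  ext l
  have : σ i ≠ σ j := fun h => hij (σ.injective h)
  simp [rot_apply _ _ hij, rot_apply _ _ this, σ.injective.eq_iff]

/-- the off diagonal pairs -/
def pairs (d : ℕ) : Finset (Fin d × Fin d) := Finset.univ.filter fun p => p.1 ≠ p.2

lemma pairs_card : ((pairs d).card : ℝ) = d * (d - 1) := by
  have : pairs d = (Finset.univ : Finset (Fin d)).offDiag := by
    ext p; simp [pairs]
  rw [this, Finset.offDiag_card]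
  simp
  rw [Nat.cast_sub (Nat.le_mul_self d)]
  push_cast; ring

lemma sum_pairs_swap (g : Fin d × Fin d → ℝ) :
    ∑ p ∈ pairs d, g p = ∑ p ∈ pairs d, g p.swap := by
  apply Finset.sum_nbij' Prod.swap Prod.swap <;> simp [pairs, eq_comm]

lemma sum_pairs_perm (g : Fin d × Fin d → ℝ) (σ : Equiv.Perm (Fin d)) :
    ∑ p ∈ pairs d, g p = ∑ p ∈ pairs d, g (σ p.1, σ p.2) := by
  symm
  apply Finset.sum_nbij' (fun p => (σ p.1, σ p.2)) (fun p => (σ.symm p.1, σ.symm p.2)) <;> simp [pairs]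

lemma fsym_step (α : Fin d → ℕ) (x : Fin d → ℝ) :
    ∑ p ∈ pairs d, fsym α ((rotM d p.1 p.2 (Real.pi / 4)).mulVec x) ≤
    ∑ p ∈ pairs d, ∑ c ∈ Finset.range (α p.1 + α p.2 + 1),
      kc (α p.1) (α p.2) c * fsym (upd α p.1 p.2 c (α p.1 + α p.2 - c)) x := by
  have h1 : ∑ p ∈ pairs d, fsym α ((rotM d p.1 p.2 (Real.pi / 4)).mulVec x) =
      ∑ σ : Equiv.Perm (Fin d), ∑ p ∈ pairs d, mon α ((rotM d p.1 p.2 (Real.pi / 4)).mulVec (x ∘ σ)) := by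
    unfold fsym
    rw [Finset.sum_comm]
    apply Finset.sum_congr rfl
    intro σ _
    rw [sum_pairs_perm _ σ]
    apply Finset.sum_congr rfl
    intro p hp
    simp only [pairs, Finset.mem_filter] at hp
    rw [rot_perm _ _ hp.2]
  have h2 : ∑ p ∈ pairs d, ∑ c ∈ Finset.range (α p.1 + α p.2 + 1),
      kc (α p.1) (α p.2) c * fsym (upd α p.1 p.2 c (α p.1 + α p.2 - c)) x =
      ∑ σ : Equiv.Perm (Fin d), ∑ p ∈ pairs d, ∑ c ∈ Finset.range (α p.1 + α p.2 + 1),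
      kc (α p.1) (α p.2) c * mon (upd α p.1 p.2 c (α p.1 + α p.2 - c)) (x ∘ σ) := by
    rw [Finset.sum_comm]
    apply Finset.sum_congr rfl
    intro p _
    rw [Finset.sum_comm]
    apply Finset.sum_congr rfl
    intro c _
    rw [fsym, Finset.mul_sum]
  rw [h1, h2]
  apply Finset.sum_le_sum
  intro σ _
  have h3 : ∀ g : Fin d × Fin d → ℝ, ∑ p ∈ pairs d, g p = (1 / 2) * ∑ p ∈ pairs d, (g p + g p.swap) := by
    intro g
    rw [Finset.sum_add_distrib, ← sum_pairs_swap]; ring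
  rw [h3, Finset.mul_sum]
  apply Finset.sum_le_sum
  intro p hp
  simp only [pairs, Finset.mem_filter] at hp
  have := mon_pair p.1 p.2 hp.2 α (x ∘ σ)
  simp only [Prod.fst_swap, Prod.snd_swap]
  linarith

lemma rr_sum (α : Fin d → ℕ) (h0 : α ≠ 0) (h1 : ∀ l, α l ≠ 1) (Q : ℕ) (hQ : ∑ l, α l ≤ Q)
    (hd : 50 * Q ≤ d) :
    ∑ p ∈ pairs d, rr (α p.1) (α p.2) ≤ d * (d - 1) * (1 - 1 / (4 * d)) := by
  set s : Fin d → ℝ := fun l => if α l = 0 then 0 else 1 with hs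
  set m : ℝ := ∑ l, s l with hm
  have hs0 : ∀ l, 0 ≤ s l := by intro l; simp only [hs]; split_ifs <;> norm_num
  have hs1 : ∀ l, s l ≤ 1 := by intro l; simp only [hs]; split_ifs <;> norm_num
  have hs2 : ∀ l, 2 * s l ≤ α l := by
    intro l; simp only [hs]; split_ifs with h
    · simp
    · have := h1 l
      have : 2 ≤ α l := by omega
      have : (2:ℝ) ≤ α l := by exact_mod_cast this
      linarith
  set q : ℝ := ∑ l, (α l : ℝ) with hq
  have hmq : 2 * m ≤ q := by
    rw [hm, Finset.mul_sum]; exact Finset.sum_le_sum fun l _ => hs2 l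
  have hqQ : q ≤ Q := by rw [hq]; exact_mod_cast hQ
  obtain ⟨i0, hi0⟩ : ∃ i, α i ≠ 0 := by
    by_contra h; push Not at h; exact h0 (funext h)
  have hm1 : 1 ≤ m := by
    have : s i0 = 1 := by simp [hs, hi0]
    rw [← this]
    exact Finset.single_le_sum (fun l _ => hs0 l) (Finset.mem_univ i0)
  have hdQ : 50 * (Q:ℝ) ≤ d := by exact_mod_cast hd
  have hoff : pairs d = (Finset.univ : Finset (Fin d)).offDiag := by
    ext p; simp [pairs]
  have hA : ∑ p ∈ pairs d, s p.1 = m * (d - 1) := by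
    have : ∑ p ∈ pairs d, s p.1 = ∑ i, ∑ j, if i ≠ j then s i else 0 := by
      rw [pairs, Finset.sum_filter, ← Finset.univ_product_univ, Finset.sum_product]
    rw [this, hm, Finset.sum_mul]
    apply Finset.sum_congr rfl
    intro i _
    rw [← Finset.sum_filter, Finset.sum_const, Finset.filter_ne, Finset.card_erase_of_mem (Finset.mem_univ _)]
    simp
    rw [Nat.cast_sub (by have := i.2; omega)]
    push_cast; ring
  have hB : ∑ p ∈ pairs d, s p.2 = m * (d - 1) := by
    rw [sum_pairs_swap]; simpa using hA
  have hC : ∑ p ∈ pairs d, s p.1 * s p.2 * (16 + 2 * (α p.1 : ℝ) + 2 * (α p.2 : ℝ)) ≤ 16 * m * m + 4 * m * q := by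
    calc _ ≤ ∑ p : Fin d × Fin d, s p.1 * s p.2 * (16 + 2 * (α p.1 : ℝ) + 2 * (α p.2 : ℝ)) := by
          apply Finset.sum_le_sum_of_subset_of_nonneg (Finset.subset_univ _)
          intro p _ _
          have := hs0 p.1
          have := hs0 p.2
          positivity
      _ ≤ ∑ p : Fin d × Fin d, (16 * (s p.1 * s p.2) + 2 * ((α p.1 : ℝ) * s p.2) + 2 * (s p.1 * (α p.2 : ℝ))) := by
          apply Finset.sum_le_sum
          intro p _
          have a1 := hs0 p.1
          have a2 := hs0 p.2
          have b1 := hs1 p.1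
          have b2 := hs1 p.2
          have c1 : s p.1 * s p.2 * α p.1 ≤ s p.2 * α p.1 := by
            apply mul_le_mul_of_nonneg_right _ (Nat.cast_nonneg _); nlinarith
          have c2 : s p.1 * s p.2 * α p.2 ≤ s p.1 * α p.2 := by
            apply mul_le_mul_of_nonneg_right _ (Nat.cast_nonneg _); nlinarith
          nlinarith
      _ = _ := by
          have hprod : ∀ f g : Fin d → ℝ, ∑ p : Fin d × Fin d, f p.1 * g p.2 = (∑ l, f l) * ∑ l, g l := by
            intro f g
            rw [← Finset.univ_product_univ, Finset.sum_product, Finset.sum_mul_sum]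
          rw [Finset.sum_add_distrib, Finset.sum_add_distrib,
            ← Finset.mul_sum, ← Finset.mul_sum, ← Finset.mul_sum, hprod s s,
            hprod (fun l => (α l : ℝ)) s, hprod s (fun l => (α l : ℝ))]
          rw [← hm, ← hq]; ring
  have hrr : ∀ p : Fin d × Fin d, rr (α p.1) (α p.2) = 1 - (1 / 4) * s p.1 - (1 / 4) * s p.2 +
      s p.1 * s p.2 * (16 + 2 * (α p.1 : ℝ) + 2 * (α p.2 : ℝ)) := by
    intro p; simp only [rr, hs]; ring
  have hd0 : (0:ℝ) < d := by nlinarith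
  simp only [hrr]
  rw [Finset.sum_add_distrib, Finset.sum_sub_distrib, Finset.sum_sub_distrib, ← Finset.mul_sum,
    ← Finset.mul_sum, hA, hB]
  simp only [Finset.sum_const, nsmul_eq_mul, mul_one, pairs_card]
  have e : (d:ℝ) * (d - 1) * (1 - 1 / (4 * d)) = d * (d - 1) - (d - 1) / 4 := by field_simp
  rw [e]
  have k1 : 12 * q ≤ (d - 1) / 4 := by nlinarith
  have k2 : (d - 1) / 4 ≤ (d - 1 : ℝ) / 2 - 16 * m - 4 * q := by linarith
  have k3 : (0:ℝ) ≤ (d - 1) / 4 := by linarith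
  nlinarith
end Dyn

section Dyn2
variable {d : ℕ}

/-- total weight -/
def Wt (α : Fin d → ℕ) : ℝ := ∏ l, wt d (α l)

lemma Wt_pos (hd : 0 < d) (α : Fin d → ℕ) : 0 < Wt α :=
  Finset.prod_pos fun _ _ => wt_pos d _ hd

/-- probability weight of a sequence of pairs -/
def nu {t : ℕ} (ω : Fin t → Fin d × Fin d) : ℝ :=
  ∏ s, if (ω s).1 ≠ (ω s).2 then ((d:ℝ) * (d - 1))⁻¹ else 0

/-- expectation over the walk -/
def EW (t : ℕ) (x0 : Fin d → ℝ) (f : (Fin d → ℝ) → ℝ) : ℝ :=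
  ∑ ω : Fin t → Fin d × Fin d, nu ω * f ((oraMatrix ω).mulVec x0)

lemma EW_zero (x0 : Fin d → ℝ) (f : (Fin d → ℝ) → ℝ) : EW 0 x0 f = f x0 := by
  simp [EW, nu, oraMatrix]

lemma EW_succ (t : ℕ) (x0 : Fin d → ℝ) (f : (Fin d → ℝ) → ℝ) : EW (t + 1) x0 f =
    EW t x0 (fun x => ((d:ℝ) * (d - 1))⁻¹ *
      ∑ p ∈ pairs d, f ((rotM d p.1 p.2 (Real.pi / 4)).mulVec x)) := by
  unfold EW
  rw [← (Fin.snocEquiv (fun _ : Fin (t + 1) => Fin d × Fin d)).sum_comp, Fintype.sum_prod_type,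
    Finset.sum_comm]
  apply Finset.sum_congr rfl
  intro ω _
  beta_reduce
  rw [pairs, Finset.sum_filter, Finset.mul_sum, Finset.mul_sum]
  apply Finset.sum_congr rfl
  intro p _
  have h1 : nu (Fin.snoc ω p : Fin (t + 1) → Fin d × Fin d) =
      nu ω * (if p.1 ≠ p.2 then ((d:ℝ) * (d - 1))⁻¹ else 0) := by
    unfold nu
    rw [Fin.prod_univ_castSucc]
    simp
  have h2 : oraMatrix (Fin.snoc ω p : Fin (t + 1) → Fin d × Fin d) =
      rotM d p.1 p.2 (Real.pi / 4) * oraMatrix ω := by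
    unfold oraMatrix
    rw [List.ofFn_succ']
    simp
  change nu (Fin.snoc ω p : Fin (t + 1) → Fin d × Fin d) *
    f ((oraMatrix (Fin.snoc ω p : Fin (t + 1) → Fin d × Fin d)).mulVec x0) = _
  rw [h1, h2, Matrix.mulVec_mulVec]
  split_ifs <;> ring

lemma rot_unit (i j : Fin d) (hij : i ≠ j) (x : Fin d → ℝ) :
    ∑ l, ((rotM d i j (Real.pi / 4)).mulVec x l) ^ 2 = ∑ l, x l ^ 2 := by
  have key : ∀ g : Fin d → ℝ, ∑ l, g l = g i + g j + ∑ l ∈ Finset.univ \ {i, j}, g l := by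
    intro g
    rw [← Finset.sum_sdiff (Finset.subset_univ ({i, j} : Finset (Fin d))), Finset.sum_pair hij,
      add_comm]
  rw [key, key (fun l => x l ^ 2)]
  congr 1
  · rw [rot_apply i j hij, rot_apply i j hij]
    have h2 : Real.sqrt 2 ^ 2 = 2 := Real.sq_sqrt (by norm_num)
    simp [hij.symm, div_pow, h2]
    ring
  · apply Finset.sum_congr rfl
    intro l hl
    simp at hl
    rw [rot_apply i j hij]; simp [hl.1, hl.2]

lemma EW_mono (hd : 2 ≤ d) (t : ℕ) (x0 : Fin d → ℝ) (hx0 : ∑ l, x0 l ^ 2 = 1)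
    (f g : (Fin d → ℝ) → ℝ) (hfg : ∀ x, ∑ l, x l ^ 2 = 1 → f x ≤ g x) : EW t x0 f ≤ EW t x0 g := by
  induction t generalizing f g with
  | zero => rw [EW_zero, EW_zero]; exact hfg _ hx0
  | succ t ih =>
    rw [EW_succ, EW_succ]
    apply ih
    intro x hx
    have : (2:ℝ) ≤ d := by exact_mod_cast hd
    apply mul_le_mul_of_nonneg_left
    · apply Finset.sum_le_sum
      intro p hp
      simp only [pairs, Finset.mem_filter] at hp
      exact hfg _ ((rot_unit p.1 p.2 hp.2 x).trans hx)
    · have : (0:ℝ) ≤ (d:ℝ) - 1 := by linarith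
      positivity

lemma EW_mul (t : ℕ) (x0 : Fin d → ℝ) (c : ℝ) (f : (Fin d → ℝ) → ℝ) :
    EW t x0 (fun x => c * f x) = c * EW t x0 f := by
  unfold EW; rw [Finset.mul_sum]; apply Finset.sum_congr rfl; intros; ring

lemma EW_sum {ι : Type*} (s : Finset ι) (t : ℕ) (x0 : Fin d → ℝ) (f : ι → (Fin d → ℝ) → ℝ) :
    EW t x0 (fun x => ∑ i ∈ s, f i x) = ∑ i ∈ s, EW t x0 (f i) := by
  unfold EW
  rw [Finset.sum_comm]
  apply Finset.sum_congr rfl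
  intro ω _
  rw [Finset.mul_sum]

lemma EW_add (t : ℕ) (x0 : Fin d → ℝ) (f g : (Fin d → ℝ) → ℝ) :
    EW t x0 (fun x => f x + g x) = EW t x0 f + EW t x0 g := by
  unfold EW
  rw [← Finset.sum_add_distrib]
  apply Finset.sum_congr rfl
  intros; ring

lemma EW_const (hd : 2 ≤ d) (t : ℕ) (x0 : Fin d → ℝ) (c : ℝ) : EW t x0 (fun _ => c) = c := by
  induction t with
  | zero => rw [EW_zero]
  | succ t ih =>
    rw [EW_succ]
    have : (2:ℝ) ≤ d := by exact_mod_cast hd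
    have h : ((d:ℝ) * (d - 1))⁻¹ * ∑ p ∈ pairs d, c = c := by
      rw [Finset.sum_const, nsmul_eq_mul, pairs_card]
      have : (d:ℝ) - 1 ≠ 0 := by linarith
      field_simp
    rw [h, ih]

lemma fsym_one (α : Fin d → ℕ) (i : Fin d) (hi : α i = 1) (x : Fin d → ℝ) (hx : ∑ l, x l ^ 2 = 1)
    (hcard : d ≤ 2 * (Finset.univ.filter fun l => α l = 0).card) :
    fsym α x ≤ 2 / d * fsym (Function.update α i 0) x := by
  set Z := Finset.univ.filter fun l => α l = 0 with hZ
  set β := Function.update α i 0 with hβ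
  have hdpos : (0:ℝ) < d := by
    have := i.2
    exact_mod_cast (by omega : 0 < d)
  have h1 : ∀ z ∈ Z, fsym α x = ∑ σ : Equiv.Perm (Fin d), (x (σ z)) ^ 2 * mon β (x ∘ σ) := by
    intro z hz
    have hz' : α z = 0 := by simpa [hZ] using hz
    have hzi : z ≠ i := by rintro rfl; omega
    unfold fsym
    rw [← Equiv.sum_comp (Equiv.mulRight (Equiv.swap i z))]
    apply Finset.sum_congr rfl
    intro σ _
    unfold mon
    rw [← Finset.mul_prod_erase _ _ (Finset.mem_univ i), ← Finset.mul_prod_erase (a := i) Finset.univ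
      (fun l => (((x ∘ σ) l) ^ 2) ^ β l) (Finset.mem_univ i)]
    have hβi : β i = 0 := by simp [hβ]
    rw [hβi, pow_zero, one_mul, hi, pow_one]
    congr 1
    · simp
    · apply Finset.prod_congr rfl
      intro l hl
      have hli : l ≠ i := by simpa using hl
      have : β l = α l := by simp [hβ, hli]
      rw [this]
      by_cases hlz : l = z
      · subst hlz; simp [hz']
      · simp [Equiv.swap_apply_of_ne_of_ne hli hlz]
  have h2 : (Z.card : ℝ) * fsym α x ≤ fsym β x := by
    calc (Z.card : ℝ) * fsym α x = ∑ z ∈ Z, fsym α x := by simp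
      _ = ∑ z ∈ Z, ∑ σ : Equiv.Perm (Fin d), (x (σ z)) ^ 2 * mon β (x ∘ σ) :=
          Finset.sum_congr rfl h1
      _ = ∑ σ : Equiv.Perm (Fin d), (∑ z ∈ Z, (x (σ z)) ^ 2) * mon β (x ∘ σ) := by
          rw [Finset.sum_comm]; apply Finset.sum_congr rfl; intros; rw [Finset.sum_mul]
      _ ≤ ∑ σ : Equiv.Perm (Fin d), 1 * mon β (x ∘ σ) := by
          apply Finset.sum_le_sum
          intro σ _
          apply mul_le_mul_of_nonneg_right _ (mon_nonneg _ _)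
          rw [← hx, ← Equiv.sum_comp σ (fun l => x l ^ 2)]
          exact Finset.sum_le_sum_of_subset_of_nonneg (Finset.subset_univ _) (fun _ _ _ => by positivity)
      _ = _ := by simp [fsym]
  have h3 : 0 ≤ fsym α x := Finset.sum_nonneg fun σ _ => mon_nonneg _ _
  have h4 : (d:ℝ) ≤ 2 * Z.card := by exact_mod_cast hcard
  rw [div_mul_eq_mul_div, le_div_iff₀ hdpos]
  nlinarith

/-- the moment bound -/
def MB (t : ℕ) (x0 : Fin d → ℝ) (Q : ℕ) (A : ℝ) : Prop :=
  ∀ α : Fin d → ℕ, ∑ l, α l ≤ Q → EW t x0 (fsym α) ≤ A * (d.factorial * Wt α)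

lemma zeros_card (α : Fin d → ℕ) (Q : ℕ) (hQ : ∑ l, α l ≤ Q) (hd : 50 * Q ≤ d) :
    d ≤ 2 * (Finset.univ.filter fun l => α l = 0).card := by
  have h1 := Finset.card_filter_add_card_filter_not (s := (Finset.univ : Finset (Fin d))) (fun l => α l = 0)
  have h2 : (Finset.univ.filter fun l => ¬ α l = 0).card ≤ ∑ l, α l := by
    rw [Finset.card_filter]
    apply Finset.sum_le_sum
    intro l _
    split_ifs <;> omega
  simp at h1
  omega

lemma MB_of_no_ones (hd2 : 2 ≤ d) (t : ℕ) (x0 : Fin d → ℝ) (hx0 : ∑ l, x0 l ^ 2 = 1) (Q : ℕ) (A : ℝ)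
    (hd : 50 * Q ≤ d)
    (H : ∀ α : Fin d → ℕ, (∀ l, α l ≠ 1) → ∑ l, α l ≤ Q → EW t x0 (fsym α) ≤ A * (d.factorial * Wt α)) :
    MB t x0 Q A := by
  have : ∀ n : ℕ, ∀ α : Fin d → ℕ, ∑ l, α l = n → ∑ l, α l ≤ Q →
      EW t x0 (fsym α) ≤ A * (d.factorial * Wt α) := by
    intro n
    induction n with
    | zero =>
      intro α h0 hQ
      apply H α _ hQ
      intro l hl
      have := Finset.single_le_sum (f := α) (fun _ _ => Nat.zero_le _) (Finset.mem_univ l)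
      omega
    | succ n ih =>
      intro α hn hQ
      by_cases h1 : ∀ l, α l ≠ 1
      · exact H α h1 hQ
      push Not at h1
      obtain ⟨i, hi⟩ := h1
      have hsum : ∑ l, Function.update α i 0 l = n := by
        have e1 := Finset.sum_update_of_mem (Finset.mem_univ i) α 0
        have e2 := Finset.sum_erase_add Finset.univ α (Finset.mem_univ i)
        rw [← Finset.sdiff_singleton_eq_erase] at e2
        omega
      have h2 := ih (Function.update α i 0) hsum (by omega)
      have h3 : EW t x0 (fsym α) ≤ 2 / d * EW t x0 (fsym (Function.update α i 0)) := by
        rw [← EW_mul]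
        apply EW_mono hd2 t x0 hx0
        intro x hx
        exact fsym_one α i hi x hx (zeros_card α Q hQ hd)
      have hW : Wt α = 2 / d * Wt (Function.update α i 0) := by
        unfold Wt
        rw [← Finset.mul_prod_erase _ _ (Finset.mem_univ i),
          ← Finset.mul_prod_erase Finset.univ (fun l => wt d (Function.update α i 0 l)) (Finset.mem_univ i)]
        have e : wt d (α i) = 2 / d := by simp [wt, hi, phi_one]; ring
        rw [e]
        simp only [Function.update_self, wt_zero, one_mul]
        congr 1
        apply Finset.prod_congr rfl
        intro l hl
        have hli : l ≠ i := by simpa using hl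
        simp [hli]
      rw [hW]
      calc _ ≤ _ := h3
        _ ≤ 2 / d * (A * (d.factorial * Wt (Function.update α i 0))) := by gcongr
        _ = _ := by ring
  exact fun α hα => this _ α rfl hα

lemma MB_step (hd2 : 2 ≤ d) (t : ℕ) (x0 : Fin d → ℝ) (hx0 : ∑ l, x0 l ^ 2 = 1) (Q : ℕ) (A : ℝ)
    (hA : 0 ≤ A) (hd : 50 * Q ≤ d) (H : MB t x0 Q A) :
    MB (t + 1) x0 Q (max 1 (A * (1 - 1 / (4 * d)))) := by
  have hdr : (2:ℝ) ≤ d := by exact_mod_cast hd2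
  apply MB_of_no_ones hd2 _ _ hx0 _ _ hd
  intro α h1 hQ
  have hW := Wt_pos (by omega) α
  by_cases h0 : α = 0
  · subst h0
    have e : fsym (0 : Fin d → ℕ) = fun _ => (d.factorial : ℝ) := by
      ext x; simp [fsym, mon, Fintype.card_perm]
    rw [e, EW_const hd2]
    have : Wt (0 : Fin d → ℕ) = 1 := by simp [Wt, wt_zero]
    rw [this, mul_one]
    have := le_max_left (1:ℝ) (A * (1 - 1 / (4 * d)))
    have h2 : (0:ℝ) < d.factorial := by exact_mod_cast Nat.factorial_pos d
    nlinarith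
  have hNpos : (0:ℝ) < (d:ℝ) * (d - 1) := by nlinarith
  rw [EW_succ, EW_mul]
  have s1 : EW t x0 (fun x => ∑ p ∈ pairs d, fsym α ((rotM d p.1 p.2 (Real.pi / 4)).mulVec x)) ≤
      EW t x0 (fun x => ∑ p ∈ pairs d, ∑ c ∈ Finset.range (α p.1 + α p.2 + 1),
      kc (α p.1) (α p.2) c * fsym (upd α p.1 p.2 c (α p.1 + α p.2 - c)) x) :=
    EW_mono hd2 t x0 hx0 _ _ fun x _ => fsym_step α x
  have s2 : EW t x0 (fun x => ∑ p ∈ pairs d, ∑ c ∈ Finset.range (α p.1 + α p.2 + 1),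
      kc (α p.1) (α p.2) c * fsym (upd α p.1 p.2 c (α p.1 + α p.2 - c)) x) ≤
      ∑ p ∈ pairs d, A * d.factorial * (rr (α p.1) (α p.2) * Wt α) := by
    rw [EW_sum]
    apply Finset.sum_le_sum
    intro p hp
    simp only [pairs, Finset.mem_filter] at hp
    rw [EW_sum]
    have hWu : ∀ c e, Wt (upd α p.1 p.2 c e) = wt d c * wt d e *
        ∏ l ∈ Finset.univ \ {p.1, p.2}, wt d (α l) := fun c e =>
      prod_upd p.1 p.2 hp.2 α c e (fun _ n => wt d n)
    have hWs : Wt α = wt d (α p.1) * wt d (α p.2) * ∏ l ∈ Finset.univ \ {p.1, p.2}, wt d (α l) :=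
      prod_split p.1 p.2 hp.2 _
    set Rr := ∏ l ∈ Finset.univ \ {p.1, p.2}, wt d (α l) with hRr
    have hR : 0 ≤ Rr := Finset.prod_nonneg fun l _ => (wt_pos d _ (by omega)).le
    calc _ ≤ ∑ c ∈ Finset.range (α p.1 + α p.2 + 1), A * d.factorial * Rr *
          (kc (α p.1) (α p.2) c * (wt d c * wt d (α p.1 + α p.2 - c))) := by
          apply Finset.sum_le_sum
          intro c hc
          have hc' : c ≤ α p.1 + α p.2 := by simpa [Nat.lt_succ_iff] using hc
          rw [EW_mul]
          have := H (upd α p.1 p.2 c (α p.1 + α p.2 - c)) (by rw [sum_upd _ _ hp.2 _ _ hc']; exact hQ)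
          rw [hWu] at this
          calc _ ≤ _ := mul_le_mul_of_nonneg_left this (kc_nonneg _ _ _)
            _ = _ := by ring
      _ = A * d.factorial * Rr * ∑ c ∈ Finset.range (α p.1 + α p.2 + 1),
          (kc (α p.1) (α p.2) c * (wt d c * wt d (α p.1 + α p.2 - c))) := by rw [Finset.mul_sum]
      _ ≤ A * d.factorial * Rr * (rr (α p.1) (α p.2) * (wt d (α p.1) * wt d (α p.2))) := by
          apply mul_le_mul_of_nonneg_left (kc_wt _ _ (by omega) (h1 _) (h1 _)) (by positivity)
      _ = _ := by rw [hWs]; ring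
  have s3 := rr_sum α h0 h1 Q hQ hd
  calc _ ≤ ((d:ℝ) * (d - 1))⁻¹ * ∑ p ∈ pairs d, A * d.factorial * (rr (α p.1) (α p.2) * Wt α) :=
        mul_le_mul_of_nonneg_left (s1.trans s2) (by positivity)
    _ = ((d:ℝ) * (d - 1))⁻¹ * (A * d.factorial * Wt α * ∑ p ∈ pairs d, rr (α p.1) (α p.2)) := by
        congr 1; rw [Finset.mul_sum]; apply Finset.sum_congr rfl; intros; ring
    _ ≤ ((d:ℝ) * (d - 1))⁻¹ * (A * d.factorial * Wt α * (d * (d - 1) * (1 - 1 / (4 * d)))) := by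
        gcongr
    _ = (A * (1 - 1 / (4 * d))) * (d.factorial * Wt α) := by
        have : (d:ℝ) - 1 ≠ 0 := by linarith
        field_simp
    _ ≤ _ := by
        apply mul_le_mul_of_nonneg_right (le_max_right _ _) (by positivity)

lemma Wt_lower (hd : 0 < d) (α : Fin d → ℕ) (Q : ℕ) (hQ : ∑ l, α l ≤ Q) :
    1 ≤ (d:ℝ) ^ Q * Wt α := by
  have hd1 : (1:ℝ) ≤ d := by exact_mod_cast hd
  have h1 : ∀ p, 1 ≤ (d:ℝ) ^ p * wt d p := by
    intro p
    unfold wt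
    split_ifs with h
    · subst h; simp
    · have : (d:ℝ) ^ p * (1 / 4 * (8 / d) ^ p * phi p) = 1 / 4 * 8 ^ p * phi p := by
        rw [div_pow]; field_simp
      rw [this]
      have h8 : (8:ℝ) ≤ 8 ^ p := by
        calc (8:ℝ) = 8 ^ 1 := by norm_num
          _ ≤ 8 ^ p := pow_le_pow_right₀ (by norm_num) (by omega)
      nlinarith [phi_ge_one p]
  calc (1:ℝ) = ∏ l : Fin d, (1:ℝ) := by simp
    _ ≤ ∏ l, (d:ℝ) ^ α l * wt d (α l) := Finset.prod_le_prod (fun _ _ => by norm_num) fun l _ => h1 _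
    _ = (d:ℝ) ^ (∑ l, α l) * Wt α := by rw [Finset.prod_mul_distrib, Finset.prod_pow_eq_pow_sum, Wt]
    _ ≤ _ := by
      have := Wt_pos hd α
      gcongr

lemma MB_all (hd2 : 2 ≤ d) (t : ℕ) (x0 : Fin d → ℝ) (hx0 : ∑ l, x0 l ^ 2 = 1) (Q : ℕ)
    (hd : 50 * Q ≤ d) : MB t x0 Q (max 1 ((1 - 1 / (4 * (d:ℝ))) ^ t * (d:ℝ) ^ Q)) := by
  have hdr : (2:ℝ) ≤ d := by exact_mod_cast hd2
  have hrho : (0:ℝ) ≤ 1 - 1 / (4 * (d:ℝ)) := by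
    rw [sub_nonneg, div_le_one (by positivity)]; linarith
  have hrho1 : 1 - 1 / (4 * (d:ℝ)) ≤ 1 := by
    have : (0:ℝ) ≤ 1 / (4 * (d:ℝ)) := by positivity
    linarith
  have mono : ∀ (s : ℕ) (A B : ℝ), A ≤ B → MB s x0 Q A → MB s x0 Q B := by
    intro s A B hAB h α hα
    have := Wt_pos (by omega) α
    exact (h α hα).trans (by gcongr)
  induction t with
  | zero =>
    intro α hα
    rw [EW_zero]
    have hx : ∀ l, x0 l ^ 2 ≤ 1 := by
      intro l; rw [← hx0]
      exact Finset.single_le_sum (f := fun l => x0 l ^ 2) (fun _ _ => by positivity) (Finset.mem_univ l)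
    have h1 : fsym α x0 ≤ d.factorial := by
      calc fsym α x0 ≤ ∑ σ : Equiv.Perm (Fin d), (1:ℝ) := by
            apply Finset.sum_le_sum
            intro σ _
            apply Finset.prod_le_one (fun _ _ => by positivity)
            intro l _
            exact pow_le_one₀ (by positivity) (hx _)
        _ = _ := by simp [Fintype.card_perm]
    have h2 := Wt_lower (by omega) α Q hα
    have h3 := Wt_pos (by omega) α
    have h4 : (d:ℝ) ^ Q ≤ max 1 ((1 - 1 / (4 * (d:ℝ))) ^ 0 * (d:ℝ) ^ Q) := by simp
    have h5 : (0:ℝ) < d.factorial := by exact_mod_cast Nat.factorial_pos d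
    calc _ ≤ (d.factorial : ℝ) * 1 := by linarith
      _ ≤ d.factorial * ((d:ℝ) ^ Q * Wt α) := by gcongr
      _ ≤ d.factorial * (max 1 ((1 - 1 / (4 * (d:ℝ))) ^ 0 * (d:ℝ) ^ Q) * Wt α) := by gcongr
      _ = _ := by ring
  | succ t ih =>
    have := MB_step hd2 t x0 hx0 Q _ (by positivity) hd ih
    refine mono _ _ _ ?_ this
    apply max_le (le_max_left _ _)
    rw [max_mul_of_nonneg _ _ hrho]
    apply max_le
    · rw [one_mul]; exact hrho1.trans (le_max_left _ _)
    · rw [pow_succ]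
      refine le_trans (le_of_eq ?_) (le_max_right _ _)
      ring

/-- clean form of the moment bound -/
lemma moment_bound (hd2 : 2 ≤ d) (t : ℕ) (x0 : Fin d → ℝ) (hx0 : ∑ l, x0 l ^ 2 = 1) (Q : ℕ)
    (hd : 50 * Q ≤ d) (ht : 4 * d * (Q * Real.log d) ≤ t) (α : Fin d → ℕ) (hα : ∑ l, α l ≤ Q) :
    EW t x0 (fun x => ∑ σ : Equiv.Perm (Fin d), ∏ l, (d * x (σ l) ^ 2) ^ α l) ≤
      d.factorial * ∏ l, (16 ^ α l * ((α l).factorial : ℝ)) := by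
  have hdr : (2:ℝ) ≤ d := by exact_mod_cast hd2
  have h1 := MB_all hd2 t x0 hx0 Q hd α hα
  have hA : max 1 ((1 - 1 / (4 * (d:ℝ))) ^ t * (d:ℝ) ^ Q) = 1 := by
    apply max_eq_left
    have hrho : (0:ℝ) ≤ 1 - 1 / (4 * (d:ℝ)) := by
      rw [sub_nonneg, div_le_one (by positivity)]; linarith
    have a1 : 1 - 1 / (4 * (d:ℝ)) ≤ Real.exp (- (1 / (4 * (d:ℝ)))) := by
      have := Real.add_one_le_exp (- (1 / (4 * (d:ℝ)))); linarith
    have a2 : (d:ℝ) ^ Q = Real.exp (Q * Real.log d) := by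
      rw [Real.exp_nat_mul, Real.exp_log (by linarith)]
    calc _ ≤ (Real.exp (- (1 / (4 * (d:ℝ))))) ^ t * Real.exp (Q * Real.log d) := by
          rw [a2]; gcongr
      _ = Real.exp (- (t / (4 * d)) + Q * Real.log d) := by
          rw [← Real.exp_nat_mul, ← Real.exp_add]; congr 1; ring
      _ ≤ 1 := by
          rw [Real.exp_le_one_iff]
          have : Q * Real.log d ≤ t / (4 * d) := by
            rw [le_div_iff₀ (by positivity)]; linarith
          linarith
  rw [hA, one_mul] at h1
  have e : (fun x : Fin d → ℝ => ∑ σ : Equiv.Perm (Fin d), ∏ l, (d * x (σ l) ^ 2) ^ α l) =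
      fun x => (d:ℝ) ^ (∑ l, α l) * fsym α x := by
    ext x
    rw [fsym, Finset.mul_sum]
    apply Finset.sum_congr rfl
    intro σ _
    simp only [mul_pow, Finset.prod_mul_distrib, Finset.prod_pow_eq_pow_sum]
    rfl
  rw [e, EW_mul]
  calc _ ≤ (d:ℝ) ^ (∑ l, α l) * (d.factorial * Wt α) := by gcongr
    _ = d.factorial * ∏ l, ((d:ℝ) ^ α l * wt d (α l)) := by
        rw [Finset.prod_mul_distrib, Finset.prod_pow_eq_pow_sum, Wt]; ring
    _ ≤ _ := by
        apply mul_le_mul_of_nonneg_left _ (by positivity)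
        apply Finset.prod_le_prod
        · intro l _
          have := wt_pos d (α l) (by omega)
          positivity
        · intro l _
          generalize α l = p
          unfold wt
          split_ifs with h
          · subst h; simp
          · have h3 := phi_le p
            have h4 := phi_pos p
            have : (d:ℝ) ^ p * (1 / 4 * (8 / d) ^ p * phi p) = 1 / 4 * (8 ^ p * phi p) := by
              rw [div_pow]; field_simp
            rw [this]
            calc 1 / 4 * ((8:ℝ) ^ p * phi p) ≤ 1 * (8 ^ p * phi p) := by gcongr; norm_num
              _ ≤ 1 * (8 ^ p * (2 ^ p * (p.factorial : ℝ))) := by gcongr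
              _ = _ := by rw [show (16:ℝ) = 8 * 2 by norm_num, mul_pow]; ring
end Dyn2

section Maclaurin

lemma mac_pt (w : ℝ) (hw : 0 ≤ w) (m : ℝ) (r : ℕ) (hr : (r:ℝ) + 1 ≤ m) :
    w ^ r * (m - (m - 1) * w) ≤ 1 + (1 - w) * (m - (r + 1)) := by
  have h1 : ∀ j ≤ r, 0 ≤ (1 - w) * (w ^ j - w ^ r) := by
    intro j hj
    rcases le_total w 1 with h | h
    · exact mul_nonneg (by linarith) (by linarith [pow_le_pow_of_le_one hw h hj])
    · exact mul_nonneg_of_nonpos_of_nonpos (by linarith) (by linarith [pow_le_pow_right₀ h hj])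
  have h2 : 0 ≤ (1 - w) * ∑ j ∈ Finset.range r, (w ^ j - w ^ r) := by
    rw [Finset.mul_sum]
    exact Finset.sum_nonneg fun j hj => h1 j (Finset.mem_range.mp hj).le
  rw [Finset.sum_sub_distrib, mul_sub, mul_neg_geom_sum] at h2
  simp only [Finset.sum_const, Finset.card_range, nsmul_eq_mul] at h2
  have h3 := mul_nonneg (sub_nonneg.mpr hr) (h1 0 (Nat.zero_le _))
  rw [pow_zero] at h3
  nlinarith

lemma esymm_rec {ι : Type*} [DecidableEq ι] (k : ℕ) (s : Finset ι) (y : ι → ℝ) :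
    ((k:ℝ) + 1) * ∑ S ∈ s.powersetCard (k + 1), ∏ i ∈ S, y i =
      ∑ j ∈ s, y j * ∑ T ∈ (s.erase j).powersetCard k, ∏ i ∈ T, y i := by
  have h1 : ((k:ℝ) + 1) * ∑ S ∈ s.powersetCard (k + 1), ∏ i ∈ S, y i =
      ∑ S ∈ s.powersetCard (k + 1), ∑ j ∈ S, ∏ i ∈ S, y i := by
    rw [Finset.mul_sum]
    apply Finset.sum_congr rfl
    intro S hS
    rw [Finset.sum_const, (Finset.mem_powersetCard.mp hS).2, nsmul_eq_mul]
    push_cast; ring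
  rw [h1]
  simp only [Finset.mul_sum]
  rw [Finset.sum_sigma', Finset.sum_sigma']
  refine Finset.sum_bij' (fun a _ => ⟨a.2, a.1.erase a.2⟩) (fun a _ => ⟨insert a.1 a.2, a.1⟩)
    ?_ ?_ ?_ ?_ ?_
  · rintro ⟨S, j⟩ h
    simp only [Finset.mem_sigma, Finset.mem_powersetCard] at h ⊢
    refine ⟨h.1.1 h.2, Finset.erase_subset_erase _ h.1.1, ?_⟩
    rw [Finset.card_erase_of_mem h.2, h.1.2]; rfl
  · rintro ⟨j, T⟩ h
    simp only [Finset.mem_sigma, Finset.mem_powersetCard] at h ⊢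
    have hj : j ∉ T := fun hj => by simpa using h.2.1 hj
    refine ⟨⟨?_, ?_⟩, Finset.mem_insert_self _ _⟩
    · apply Finset.insert_subset h.1 (h.2.1.trans (Finset.erase_subset _ _))
    · rw [Finset.card_insert_of_notMem hj, h.2.2]
  · rintro ⟨S, j⟩ h
    simp only [Finset.mem_sigma, Finset.mem_powersetCard] at h
    simp [Finset.insert_erase h.2]
  · rintro ⟨j, T⟩ h
    simp only [Finset.mem_sigma, Finset.mem_powersetCard] at h
    have hj : j ∉ T := fun hj => by simpa using h.2.1 hj
    simp [Finset.erase_insert hj]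
  · rintro ⟨S, j⟩ h
    simp only [Finset.mem_sigma, Finset.mem_powersetCard] at h
    exact (Finset.mul_prod_erase _ _ h.2).symm

lemma maclaurin {ι : Type*} [DecidableEq ι] (y : ι → ℝ) (k : ℕ) : ∀ s : Finset ι, k ≤ s.card →
    (∀ i ∈ s, 0 ≤ y i) →
    ∑ S ∈ s.powersetCard k, ∏ i ∈ S, y i ≤ (s.card.choose k : ℝ) * ((∑ i ∈ s, y i) / s.card) ^ k := by
  induction k with
  | zero => intro s _ _; simp
  | succ k ih =>
    intro s hk hy
    obtain ⟨m, hm⟩ : ∃ m, s.card = m + 1 := ⟨s.card - 1, by omega⟩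
    have hrec := esymm_rec k s y
    rw [hm] at hk ⊢
    have hch : ((m + 1).choose (k + 1) : ℝ) * (k + 1) = (m + 1) * (m.choose k : ℝ) := by
      exact_mod_cast (Nat.add_one_mul_choose_eq m k).symm
    set μ := (∑ i ∈ s, y i) / ((m + 1 : ℕ) : ℝ) with hμ
    have hm1 : (0:ℝ) < ((m + 1 : ℕ) : ℝ) := by positivity
    have hsum : ∑ i ∈ s, y i = (m + 1) * μ := by rw [hμ]; push_cast; field_simp
    have hμ0 : 0 ≤ μ := div_nonneg (Finset.sum_nonneg hy) hm1.le
    have key : ∀ j ∈ s, y j * ∑ T ∈ (s.erase j).powersetCard k, ∏ i ∈ T, y i ≤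
        (m.choose k : ℝ) * μ ^ k * (μ + (y j - μ) * ((m - k) / m)) := by
      intro j hj
      have hc : (s.erase j).card = m := by rw [Finset.card_erase_of_mem hj, hm]; rfl
      have h1 := ih (s.erase j) (by omega) (fun i hi => hy i (Finset.mem_of_mem_erase hi))
      rw [hc] at h1
      have h2 : ∑ i ∈ s.erase j, y i = (m + 1) * μ - y j := by
        rw [← hsum, ← Finset.add_sum_erase _ _ hj]; ring
      have h3 : 0 ≤ (m + 1) * μ - y j := by
        rw [← h2]; exact Finset.sum_nonneg (fun i hi => hy i (Finset.mem_of_mem_erase hi))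
      rw [h2] at h1
      refine (mul_le_mul_of_nonneg_left h1 (hy j hj)).trans ?_
      have hyj := hy j hj
      rcases Nat.eq_zero_or_pos m with h0 | hmpos
      · subst h0
        have : k = 0 := by omega
        subst this
        simp at h2 ⊢
        have hs1 : s = {j} := by
          rw [Finset.card_eq_one] at hm
          obtain ⟨a, rfl⟩ := hm
          simp at hj; rw [hj]
        rw [hs1] at hsum
        simp at hsum; exact hsum.le
      · have hmr : (0:ℝ) < m := by exact_mod_cast hmpos
        rcases hμ0.eq_or_lt with h0 | hpos
        · rw [← h0] at h3 ⊢
          have : y j = 0 := by linarith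
          rw [this]; simp
        · have hkm : (k:ℝ) + 1 ≤ (m:ℝ) + 1 := by exact_mod_cast hk
          have := mac_pt (((m + 1) * μ - y j) / (m * μ)) (by positivity) (m + 1) k hkm
          have e1 : ((m:ℝ) + 1 - (m + 1 - 1) * (((m + 1) * μ - y j) / (m * μ))) = y j / μ := by
            field_simp; ring
          have e2 : 1 + (1 - ((m + 1) * μ - y j) / (m * μ)) * ((m:ℝ) + 1 - (k + 1)) =
              (μ + (y j - μ) * ((m - k) / m)) / μ := by field_simp; ring
          rw [e1, e2] at this
          have e3 : ((m + 1) * μ - y j) / m = μ * (((m + 1) * μ - y j) / (m * μ)) := by field_simp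
          rw [e3, mul_pow]
          set W := (((m + 1) * μ - y j) / (m * μ)) ^ k
          have h5 : W * y j ≤ (μ + (y j - μ) * ((m - k) / m)) := by
            have := mul_le_mul_of_nonneg_right this hpos.le
            rwa [div_mul_cancel₀ _ hpos.ne', mul_assoc, div_mul_cancel₀ _ hpos.ne'] at this
          calc y j * ((m.choose k : ℝ) * (μ ^ k * W)) = (m.choose k : ℝ) * μ ^ k * (W * y j) := by ring
            _ ≤ _ := by gcongr
    have h4 : ((k:ℝ) + 1) * ∑ S ∈ s.powersetCard (k + 1), ∏ i ∈ S, y i ≤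
        (m.choose k : ℝ) * μ ^ k * ((m + 1) * μ) := by
      rw [hrec]
      refine (Finset.sum_le_sum key).trans (le_of_eq ?_)
      rw [← Finset.mul_sum, Finset.sum_add_distrib, ← Finset.sum_mul, Finset.sum_sub_distrib, hsum]
      simp only [Finset.sum_const, hm, nsmul_eq_mul]
      push_cast; ring
    have hk1 : (0:ℝ) < (k:ℝ) + 1 := by positivity
    refine le_of_mul_le_mul_left (h4.trans (le_of_eq ?_)) hk1
    rw [pow_succ]
    linear_combination (-(μ ^ k * μ)) * hch

end Maclaurin
section Mom
variable {d : ℕ}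

lemma geom_aux (z η : ℝ) (hz : 0 ≤ z) (hz2 : z ≤ 1 / 2) (hη : 0 ≤ η) (P : ℕ) :
    ∑ j ∈ Finset.range (P + 1), (if j = 0 then 1 else η) * z ^ j ≤ Real.exp (2 * η * z) := by
  rw [Finset.sum_range_succ']
  simp only [Nat.add_eq_zero_iff, one_ne_zero, and_false, if_false, if_true, pow_zero, mul_one]
  have h1 : ∑ j ∈ Finset.range P, η * z ^ (j + 1) = η * z * ∑ j ∈ Finset.range P, z ^ j := by
    rw [Finset.mul_sum]; apply Finset.sum_congr rfl; intros; ring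
  have h2 : (1 - z) * ∑ j ∈ Finset.range P, z ^ j ≤ 1 := by
    rw [mul_neg_geom_sum]; linarith [pow_nonneg hz P]
  have h3 : 0 ≤ ∑ j ∈ Finset.range P, z ^ j := Finset.sum_nonneg fun _ _ => pow_nonneg hz _
  have h4 : ∑ j ∈ Finset.range P, z ^ j ≤ 2 := by nlinarith
  have h5 : η * z * ∑ j ∈ Finset.range P, z ^ j ≤ η * z * 2 := by gcongr
  rw [h1]
  have := Real.add_one_le_exp (2 * η * z)
  linarith

lemma comp_sum (S : Finset (Fin d)) (P : ℕ) (z η : ℝ) (hz : 0 < z) (hz2 : z ≤ 1 / 2) (hη : 0 ≤ η) :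
    ∑ κ ∈ S.piAntidiag P, ∏ l ∈ S, (if κ l = 0 then 1 else η) ≤
      (1 / z) ^ P * Real.exp (2 * S.card * η * z) := by
  have h1 : ∀ κ ∈ S.piAntidiag P, ∏ l ∈ S, (if κ l = 0 then 1 else η) =
      (1 / z) ^ P * ∏ l, (if κ l = 0 then 1 else η) * z ^ κ l := by
    intro κ hκ
    rw [Finset.mem_piAntidiag] at hκ
    have e : ∏ l, (if κ l = 0 then 1 else η) * z ^ κ l =
        ∏ l ∈ S, (if κ l = 0 then 1 else η) * z ^ κ l := by
      symm
      apply Finset.prod_subset (Finset.subset_univ _)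
      intro l _ hl
      have : κ l = 0 := by by_contra h; exact hl (hκ.2 l h)
      simp [this]
    rw [e, Finset.prod_mul_distrib, Finset.prod_pow_eq_pow_sum, hκ.1, one_div, inv_pow]
    field_simp
  rw [Finset.sum_congr rfl h1, ← Finset.mul_sum]
  apply mul_le_mul_of_nonneg_left _ (by positivity)
  have h2 : S.piAntidiag P ⊆
      Fintype.piFinset (fun l => if l ∈ S then Finset.range (P + 1) else {0}) := by
    intro κ hκ
    rw [Finset.mem_piAntidiag] at hκ
    rw [Fintype.mem_piFinset]
    intro l
    split_ifs with hl
    · have := Finset.single_le_sum (f := κ) (fun _ _ => Nat.zero_le _) hl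
      rw [Finset.mem_range]; have h3 := this.trans_eq hκ.1; omega
    · rw [Finset.mem_singleton]; by_contra h; exact hl (hκ.2 l h)
  calc _ ≤ ∑ κ ∈ Fintype.piFinset (fun l => if l ∈ S then Finset.range (P + 1) else {0}),
        ∏ l, (if κ l = 0 then 1 else η) * z ^ κ l := by
        apply Finset.sum_le_sum_of_subset_of_nonneg h2
        intro κ _ _
        apply Finset.prod_nonneg
        intro l _
        split_ifs <;> positivity
    _ = ∏ l : Fin d, ∑ j ∈ (if l ∈ S then Finset.range (P + 1) else {0}),
        (if j = 0 then 1 else η) * z ^ j := by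
        rw [Finset.prod_univ_sum]
    _ ≤ ∏ l : Fin d, (if l ∈ S then Real.exp (2 * η * z) else 1) := by
        apply Finset.prod_le_prod
        · intro l _
          apply Finset.sum_nonneg
          intro j _
          split_ifs <;> positivity
        · intro l _
          split_ifs with hl
          · exact geom_aux z η hz.le hz2 hη P
          · simp
    _ = _ := by
        rw [Finset.prod_ite_mem, Finset.univ_inter, Finset.prod_const, ← Real.exp_nat_mul]
        congr 1; ring

lemma mom_gen (hd2 : 2 ≤ d) (t : ℕ) (x0 : Fin d → ℝ) (hx0 : ∑ l, x0 l ^ 2 = 1) (P r : ℕ) (hr : r ≤ 2)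
    (hd : 50 * (3 * P) ≤ d) (ht : 4 * d * ((3 * P : ℕ) * Real.log d) ≤ t)
    (c : ℝ → ℝ) (w : ℕ → ℝ) (η Γ z : ℝ) (hη : 0 ≤ η) (hΓ : 0 < Γ) (hz : 0 < z) (hz2 : z ≤ 1 / 2)
    (hc : ∀ a, 0 ≤ a → 0 ≤ c a) (hw : ∀ p, 0 ≤ w p)
    (h1 : ∀ a, 0 ≤ a → ∀ p, 1 ≤ p → c a ^ p ≤ w p * a ^ (p + r))
    (h2 : ∀ p, 1 ≤ p → w p * (16 ^ (p + r) * ((p + r).factorial : ℝ)) ≤ η * (Γ ^ p * p.factorial))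
    (S : Finset (Fin d)) :
    EW t x0 (fun x => ∑ σ : Equiv.Perm (Fin d), (∑ i ∈ S, c (d * x (σ i) ^ 2)) ^ P) ≤
      d.factorial * (P.factorial * (Γ / z) ^ P * Real.exp (2 * S.card * η * z)) := by
  set e : ℕ → ℕ := fun p => if p = 0 then 0 else p + r with he
  set wh : ℕ → ℝ := fun p => if p = 0 then 1 else w p with hwh
  have hwh0 : ∀ p, 0 ≤ wh p := by
    intro p; simp only [hwh]; split_ifs; exacts [zero_le_one, hw p]
  have step1 : EW t x0 (fun x => ∑ σ : Equiv.Perm (Fin d), (∑ i ∈ S, c (d * x (σ i) ^ 2)) ^ P) ≤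
      EW t x0 (fun x => ∑ κ ∈ S.piAntidiag P, ((Nat.multinomial S κ : ℝ) * ∏ l ∈ S, wh (κ l)) *
        ∑ σ : Equiv.Perm (Fin d), ∏ l, (d * x (σ l) ^ 2) ^ e (κ l)) := by
    apply EW_mono hd2 t x0 hx0
    intro x _
    simp only [Finset.mul_sum]
    rw [Finset.sum_comm]
    apply Finset.sum_le_sum
    intro σ _
    rw [Finset.sum_pow_eq_sum_piAntidiag]
    apply Finset.sum_le_sum
    intro κ hκ
    rw [Finset.mem_piAntidiag] at hκ
    rw [mul_assoc]
    apply mul_le_mul_of_nonneg_left _ (by positivity)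
    have e1 : ∏ l, ((d:ℝ) * x (σ l) ^ 2) ^ e (κ l) = ∏ l ∈ S, ((d:ℝ) * x (σ l) ^ 2) ^ e (κ l) := by
      symm
      apply Finset.prod_subset (Finset.subset_univ _)
      intro l _ hl
      have : κ l = 0 := by by_contra h; exact hl (hκ.2 l h)
      simp [this, he]
    rw [e1, ← Finset.prod_mul_distrib]
    apply Finset.prod_le_prod
    · intro l _; exact pow_nonneg (hc _ (by positivity)) _
    · intro l _
      by_cases h0 : κ l = 0
      · simp [h0, he, hwh]
      · simp only [he, hwh, h0, if_false]
        exact h1 _ (by positivity) _ (by omega)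
  refine step1.trans ?_
  rw [EW_sum]
  have step2 : ∀ κ ∈ S.piAntidiag P, EW t x0 (fun x => ((Nat.multinomial S κ : ℝ) * ∏ l ∈ S, wh (κ l)) *
        ∑ σ : Equiv.Perm (Fin d), ∏ l, (d * x (σ l) ^ 2) ^ e (κ l)) ≤
        d.factorial * P.factorial * Γ ^ P * ∏ l ∈ S, (if κ l = 0 then 1 else η) := by
    intro κ hκ
    rw [Finset.mem_piAntidiag] at hκ
    have hz0 : ∀ l ∉ S, κ l = 0 := fun l hl => by by_contra h; exact hl (hκ.2 l h)
    rw [EW_mul]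
    have hsum : ∑ l, e (κ l) ≤ 3 * P := by
      have : ∑ l, κ l = P := by
        rw [← hκ.1]; symm
        exact Finset.sum_subset (Finset.subset_univ _) fun l _ hl => hz0 l hl
      rw [← this, Finset.mul_sum]
      apply Finset.sum_le_sum
      intro l _
      simp only [he]
      split_ifs <;> omega
    have hm := moment_bound hd2 t x0 hx0 (3 * P) hd ht (fun l => e (κ l)) hsum
    have hprod : (∏ l ∈ S, wh (κ l)) * ∏ l, ((16:ℝ) ^ e (κ l) * ((e (κ l)).factorial : ℝ)) ≤
        (∏ l ∈ S, (if κ l = 0 then 1 else η)) * (Γ ^ P * ∏ l ∈ S, ((κ l).factorial : ℝ)) := by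
      have e1 : ∏ l, ((16:ℝ) ^ e (κ l) * ((e (κ l)).factorial : ℝ)) =
          ∏ l ∈ S, ((16:ℝ) ^ e (κ l) * ((e (κ l)).factorial : ℝ)) := by
        symm
        apply Finset.prod_subset (Finset.subset_univ _)
        intro l _ hl
        simp [hz0 l hl, he]
      rw [e1, ← hκ.1, ← Finset.prod_pow_eq_pow_sum, ← Finset.prod_mul_distrib, ← Finset.prod_mul_distrib,
        ← Finset.prod_mul_distrib]
      apply Finset.prod_le_prod
      · intro l _; have := hwh0 (κ l); positivity
      · intro l _
        by_cases h0 : κ l = 0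
        · simp [h0, he, hwh]
        · simp only [he, hwh, h0, if_false]
          exact h2 _ (by omega)
    have hspec : (∏ l ∈ S, ((κ l).factorial : ℝ)) * (Nat.multinomial S κ : ℝ) = (P.factorial : ℝ) := by
      have := Nat.multinomial_spec S κ
      rw [hκ.1] at this
      exact_mod_cast this
    have hW : 0 ≤ ∏ l ∈ S, wh (κ l) := Finset.prod_nonneg fun l _ => hwh0 _
    calc _ ≤ ((Nat.multinomial S κ : ℝ) * ∏ l ∈ S, wh (κ l)) *
          (d.factorial * ∏ l, ((16:ℝ) ^ e (κ l) * ((e (κ l)).factorial : ℝ))) :=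
          mul_le_mul_of_nonneg_left hm (by positivity)
      _ = (Nat.multinomial S κ : ℝ) * d.factorial * ((∏ l ∈ S, wh (κ l)) *
          ∏ l, ((16:ℝ) ^ e (κ l) * ((e (κ l)).factorial : ℝ))) := by ring
      _ ≤ (Nat.multinomial S κ : ℝ) * d.factorial * ((∏ l ∈ S, (if κ l = 0 then 1 else η)) *
          (Γ ^ P * ∏ l ∈ S, ((κ l).factorial : ℝ))) := by gcongr
      _ = _ := by rw [← hspec]; ring
  refine (Finset.sum_le_sum step2).trans ?_
  rw [← Finset.mul_sum]
  have := comp_sum S P z η hz hz2 hη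
  calc _ ≤ d.factorial * P.factorial * Γ ^ P * ((1 / z) ^ P * Real.exp (2 * S.card * η * z)) := by gcongr
    _ = _ := by rw [div_pow, div_pow, one_pow]; ring

end Mom
section Sym
variable {d : ℕ}

lemma sum_perm_apply (g : Fin d → ℝ) (i : Fin d) :
    (d:ℝ) * ∑ σ : Equiv.Perm (Fin d), g (σ i) = d.factorial * ∑ j, g j := by
  have h1 : ∀ j, ∑ σ : Equiv.Perm (Fin d), g (σ i) = ∑ σ : Equiv.Perm (Fin d), g (σ j) := by
    intro j
    rw [← Equiv.sum_comp (Equiv.mulRight (Equiv.swap i j))]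
    apply Finset.sum_congr rfl
    intro σ _
    simp
  calc (d:ℝ) * ∑ σ : Equiv.Perm (Fin d), g (σ i) =
        ∑ j : Fin d, ∑ σ : Equiv.Perm (Fin d), g (σ i) := by simp
    _ = ∑ j : Fin d, ∑ σ : Equiv.Perm (Fin d), g (σ j) := Finset.sum_congr rfl fun j _ => h1 j
    _ = ∑ σ : Equiv.Perm (Fin d), ∑ j, g j := by
        rw [Finset.sum_comm]
        apply Finset.sum_congr rfl
        intro σ _
        exact Equiv.sum_comp σ g
    _ = _ := by simp [Fintype.card_perm]

lemma jensen_perm (hd : 0 < d) (g : Fin d → ℝ) (hg : ∀ i, 0 ≤ g i) (S : Finset (Fin d)) (P : ℕ) :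
    (d.factorial : ℝ) * (S.card * ((∑ i, g i) / d)) ^ P ≤
      ∑ σ : Equiv.Perm (Fin d), (∑ i ∈ S, g (σ i)) ^ P := by
  have hf : (0:ℝ) < d.factorial := by exact_mod_cast Nat.factorial_pos d
  have hdr : (0:ℝ) < d := by exact_mod_cast hd
  have h := Real.pow_arith_mean_le_arith_mean_pow (Finset.univ : Finset (Equiv.Perm (Fin d)))
    (fun _ => (d.factorial : ℝ)⁻¹) (fun σ => ∑ i ∈ S, g (σ i)) (fun _ _ => by positivity)
    (by simp [Fintype.card_perm]; field_simp) (fun σ _ => Finset.sum_nonneg fun i _ => hg _) P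
  have e : ∑ σ : Equiv.Perm (Fin d), (d.factorial : ℝ)⁻¹ * ∑ i ∈ S, g (σ i) =
      S.card * ((∑ i, g i) / d) := by
    rw [← Finset.mul_sum, Finset.sum_comm]
    have : ∀ i ∈ S, ∑ σ : Equiv.Perm (Fin d), g (σ i) = d.factorial * (∑ j, g j) / d := by
      intro i _
      rw [eq_div_iff hdr.ne', ← sum_perm_apply g i]; ring
    rw [Finset.sum_congr rfl this, Finset.sum_const, nsmul_eq_mul]
    field_simp
  rw [e, ← Finset.mul_sum] at h
  calc _ ≤ (d.factorial : ℝ) * ((d.factorial : ℝ)⁻¹ * ∑ σ : Equiv.Perm (Fin d), (∑ i ∈ S, g (σ i)) ^ P) := by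
        gcongr
    _ = _ := by field_simp

lemma sym_subsets (g : Fin d → ℝ) (k P : ℕ) (σ : Equiv.Perm (Fin d)) :
    ∑ S ∈ (Finset.univ : Finset (Fin d)).powersetCard k, (∑ i ∈ S, g (σ i)) ^ P =
      ∑ S ∈ (Finset.univ : Finset (Fin d)).powersetCard k, (∑ i ∈ S, g i) ^ P := by
  refine Finset.sum_bij' (fun S _ => S.map σ.toEmbedding) (fun S _ => S.map σ.symm.toEmbedding)
    ?_ ?_ ?_ ?_ ?_
  · intro S hS; simpa using hS
  · intro S hS; simpa using hS
  · intro S _; ext i; simp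
  · intro S _; ext i; simp
  · intro S _; simp

lemma sym_subsets_avg (g : Fin d → ℝ) (k P : ℕ) :
    (d.factorial : ℝ) * ∑ S ∈ (Finset.univ : Finset (Fin d)).powersetCard k, (∑ i ∈ S, g i) ^ P =
      ∑ S ∈ (Finset.univ : Finset (Fin d)).powersetCard k,
        ∑ σ : Equiv.Perm (Fin d), (∑ i ∈ S, g (σ i)) ^ P := by
  rw [Finset.sum_comm, Finset.sum_congr rfl (fun σ _ => sym_subsets g k P σ)]
  simp [Fintype.card_perm]

lemma mom_subsets (t : ℕ) (x0 : Fin d → ℝ)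
    (c : ℝ → ℝ) (k P : ℕ) (B : ℝ)
    (H : ∀ S : Finset (Fin d), S.card = k →
      EW t x0 (fun x => ∑ σ : Equiv.Perm (Fin d), (∑ i ∈ S, c (d * x (σ i) ^ 2)) ^ P) ≤ d.factorial * B) :
    EW t x0 (fun x => ∑ S ∈ (Finset.univ : Finset (Fin d)).powersetCard k,
      (∑ i ∈ S, c (d * x i ^ 2)) ^ P) ≤ d.choose k * B := by
  have hf : (0:ℝ) < d.factorial := by exact_mod_cast Nat.factorial_pos d
  refine le_of_mul_le_mul_left ?_ hf
  rw [← EW_mul]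
  have e : (fun x : Fin d → ℝ => (d.factorial : ℝ) * ∑ S ∈ (Finset.univ : Finset (Fin d)).powersetCard k,
      (∑ i ∈ S, c (d * x i ^ 2)) ^ P) = fun x => ∑ S ∈ (Finset.univ : Finset (Fin d)).powersetCard k,
        ∑ σ : Equiv.Perm (Fin d), (∑ i ∈ S, c (d * x (σ i) ^ 2)) ^ P := by
    ext x
    exact sym_subsets_avg (fun i => c (d * x i ^ 2)) k P
  rw [e, EW_sum]
  calc _ ≤ ∑ S ∈ (Finset.univ : Finset (Fin d)).powersetCard k, (d.factorial * B) :=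
        Finset.sum_le_sum fun S hS => H S (Finset.mem_powersetCard.mp hS).2
    _ = _ := by
        rw [Finset.sum_const, Finset.card_powersetCard, Finset.card_univ, Fintype.card_fin, nsmul_eq_mul]
        ring

lemma mom_mean (hd2 : 2 ≤ d) (t : ℕ) (x0 : Fin d → ℝ) (hx0 : ∑ l, x0 l ^ 2 = 1)
    (c : ℝ → ℝ) (hc : ∀ a, 0 ≤ a → 0 ≤ c a) (k P : ℕ) (hk : k ≤ d) (B : ℝ)
    (H : ∀ S : Finset (Fin d), S.card = k →
      EW t x0 (fun x => ∑ σ : Equiv.Perm (Fin d), (∑ i ∈ S, c (d * x (σ i) ^ 2)) ^ P) ≤ d.factorial * B) :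
    EW t x0 (fun x => (k * ((∑ i, c (d * x i ^ 2)) / d)) ^ P) ≤ B := by
  have hf : (0:ℝ) < d.factorial := by exact_mod_cast Nat.factorial_pos d
  refine le_of_mul_le_mul_left ?_ hf
  obtain ⟨S, _, hS⟩ := Finset.exists_subset_card_eq (s := (Finset.univ : Finset (Fin d))) (n := k) (by simpa using hk)
  refine le_trans ?_ (H S hS)
  rw [← EW_mul]
  apply EW_mono hd2 t x0 hx0
  intro x _
  have := jensen_perm (by omega) (fun i => c (d * x i ^ 2)) (fun i => hc _ (by positivity)) S P
  rw [hS] at this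
  exact this

/-- Bernstein bound for sampling without replacement -/
lemma bern (hd : 0 < d) (k : ℕ) (hk : k ≤ d) (u : Fin d → ℝ) (V lam c : ℝ)
    (hu : ∀ i, |lam * u i| ≤ 1) (hV : ∑ i, u i ^ 2 ≤ d * V) :
    ∑ S ∈ (Finset.univ : Finset (Fin d)).powersetCard k, (if c ≤ lam * ∑ i ∈ S, u i then (1:ℝ) else 0) ≤
      d.choose k * Real.exp (k * (lam * ((∑ i, u i) / d) + lam ^ 2 * V) - c) := by
  have hdr : (0:ℝ) < d := by exact_mod_cast hd
  have h1 : ∀ S ∈ (Finset.univ : Finset (Fin d)).powersetCard k,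
      (if c ≤ lam * ∑ i ∈ S, u i then (1:ℝ) else 0) ≤ Real.exp (-c) * ∏ i ∈ S, Real.exp (lam * u i) := by
    intro S _
    rw [← Real.exp_sum, ← Finset.mul_sum, ← Real.exp_add]
    split_ifs with h
    · apply Real.one_le_exp; linarith
    · positivity
  refine (Finset.sum_le_sum h1).trans ?_
  rw [← Finset.mul_sum]
  have h2 := maclaurin (fun i : Fin d => Real.exp (lam * u i)) k Finset.univ (by simpa using hk)
    (fun _ _ => by positivity)
  rw [Finset.card_univ, Fintype.card_fin] at h2
  have h3 : (∑ i, Real.exp (lam * u i)) / d ≤ Real.exp (lam * ((∑ i, u i) / d) + lam ^ 2 * V) := by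
    have h4 : ∑ i, Real.exp (lam * u i) ≤ ∑ i, (1 + lam * u i + lam ^ 2 * u i ^ 2) := by
      apply Finset.sum_le_sum
      intro i _
      have := (abs_le.mp (Real.abs_exp_sub_one_sub_id_le (hu i))).2
      nlinarith
    rw [Finset.sum_add_distrib, Finset.sum_add_distrib, ← Finset.mul_sum, ← Finset.mul_sum] at h4
    simp only [Finset.sum_const, Finset.card_univ, Fintype.card_fin, nsmul_eq_mul, mul_one] at h4
    have h5 : lam ^ 2 * ∑ i, u i ^ 2 ≤ lam ^ 2 * (d * V) := by gcongr
    have h6 := Real.add_one_le_exp (lam * ((∑ i, u i) / d) + lam ^ 2 * V)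
    refine le_trans ?_ h6
    rw [div_le_iff₀ hdr]
    have : (lam * ((∑ i, u i) / d) + lam ^ 2 * V + 1) * d = lam * ∑ i, u i + lam ^ 2 * (d * V) + d := by
      field_simp
    linarith
  calc _ ≤ Real.exp (-c) * (d.choose k * (Real.exp (lam * ((∑ i, u i) / d) + lam ^ 2 * V)) ^ k) := by
        gcongr
        refine h2.trans ?_
        gcongr
    _ = _ := by
        rw [← Real.exp_nat_mul, sub_eq_add_neg, Real.exp_add]; ring

end Sym
section Pointwise
variable {d : ℕ}

lemma ind_le_pow {v K : ℝ} (hK : 0 < K) (P : ℕ) (h : K < v) : (1:ℝ) ≤ (v / K) ^ P :=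
  one_le_pow₀ ((one_le_div hK).mpr h.le)

set_option maxHeartbeats 800000 in
open Classical in
lemma pt_bound (hd : 0 < d) (k : ℕ) (hk0 : 0 < k) (hk : k ≤ d) (ε M K : ℝ) (hε : 0 < ε)
    (hM : 0 < M) (hK : 0 < K) (hKM : ε * M ≤ 4 * K) (P : ℕ) (x : Fin d → ℝ) (hx : ∑ l, x l ^ 2 = 1) :
    ∑ S ∈ (Finset.univ : Finset (Fin d)).powersetCard k,
      (if ∑ i ∈ S, x i ^ 2 ∉ Set.Icc ((1 - ε) * k / d) ((1 + ε) * k / d) then (1:ℝ) else 0) ≤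
    d.choose k * (2 * Real.exp (-(k * ε ^ 2 / (16 * K))) +
      (1 / (k * K)) ^ P * (k * ((∑ i, (min (d * x i ^ 2) M) ^ 2) / d)) ^ P +
      (1 / (k * (ε / 2))) ^ P * (k * ((∑ i, max (d * x i ^ 2 - M) 0) / d)) ^ P) +
      (1 / (k * (ε / 2))) ^ P * ∑ S ∈ (Finset.univ : Finset (Fin d)).powersetCard k,
        (∑ i ∈ S, max (d * x i ^ 2 - M) 0) ^ P := by
  have hdr : (0:ℝ) < d := by exact_mod_cast hd
  have hkr : (0:ℝ) < k := by exact_mod_cast hk0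
  set u : Fin d → ℝ := fun i => min (d * x i ^ 2) M with hu
  set b : Fin d → ℝ := fun i => max (d * x i ^ 2 - M) 0 with hb
  have hu0 : ∀ i, 0 ≤ u i := fun i => le_min (by positivity) hM.le
  have huM : ∀ i, u i ≤ M := fun i => min_le_right _ _
  have hb0 : ∀ i, 0 ≤ b i := fun i => le_max_right _ _
  have hub : ∀ i, u i + b i = d * x i ^ 2 := by
    intro i
    simp only [hu, hb]
    rcases le_total (d * x i ^ 2) M with h | h
    · rw [min_eq_left h, max_eq_right (by linarith)]; ring
    · rw [min_eq_right h, max_eq_left (by linarith)]; ring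
  have hsub : ∑ i, u i + ∑ i, b i = d := by
    rw [← Finset.sum_add_distrib, Finset.sum_congr rfl (fun i _ => hub i), ← Finset.mul_sum, hx, mul_one]
  set V := (∑ i, u i ^ 2) / d with hV
  set bb := (∑ i, b i) / d with hbb
  have hbb0 : 0 ≤ bb := div_nonneg (Finset.sum_nonneg fun i _ => hb0 i) hdr.le
  have hV0 : 0 ≤ V := div_nonneg (Finset.sum_nonneg fun i _ => by positivity) hdr.le
  have huu : (∑ i, u i) / d = 1 - bb := by
    rw [hbb, eq_sub_iff_add_eq, ← add_div, hsub, div_self hdr.ne']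
  have r1 : (1 / (k * K)) ^ P * (k * V) ^ P = (V / K) ^ P := by
    rw [← mul_pow]; congr 1; field_simp
  have r2 : (1 / (k * (ε / 2))) ^ P * (k * bb) ^ P = (bb / (ε / 2)) ^ P := by
    rw [← mul_pow]; congr 1; field_simp
  have r3 : (1 / (k * (ε / 2))) ^ P * ∑ S ∈ (Finset.univ : Finset (Fin d)).powersetCard k,
        (∑ i ∈ S, b i) ^ P = ∑ S ∈ (Finset.univ : Finset (Fin d)).powersetCard k,
        ((∑ i ∈ S, b i) / (k * (ε / 2))) ^ P := by
    rw [Finset.mul_sum]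
    apply Finset.sum_congr rfl
    intro S _
    rw [← mul_pow]; congr 1; ring
  rw [r1, r2, r3]
  have n1 : 0 ≤ (V / K) ^ P := by positivity
  have n2 : 0 ≤ (bb / (ε / 2)) ^ P := by positivity
  have n3 : 0 ≤ ∑ S ∈ (Finset.univ : Finset (Fin d)).powersetCard k,
        ((∑ i ∈ S, b i) / (k * (ε / 2))) ^ P := Finset.sum_nonneg fun S _ => by
    have : 0 ≤ ∑ i ∈ S, b i := Finset.sum_nonneg fun i _ => hb0 i
    positivity
  have n4 : 0 < Real.exp (-(k * ε ^ 2 / (16 * K))) := Real.exp_pos _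
  have triv : ∑ S ∈ (Finset.univ : Finset (Fin d)).powersetCard k,
      (if ∑ i ∈ S, x i ^ 2 ∉ Set.Icc ((1 - ε) * k / d) ((1 + ε) * k / d) then (1:ℝ) else 0) ≤
      d.choose k := by
    calc _ ≤ ∑ S ∈ (Finset.univ : Finset (Fin d)).powersetCard k, (1:ℝ) := by
          apply Finset.sum_le_sum; intro S _; split_ifs <;> norm_num
      _ = _ := by simp
  have hC : (0:ℝ) ≤ d.choose k := by positivity
  by_cases g2 : K < V
  · have := ind_le_pow hK P g2
    nlinarith
  by_cases g1 : ε / 2 < bb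
  · have := ind_le_pow (by positivity) P g1
    nlinarith
  push Not at g1 g2
  have hV' : ∑ i, u i ^ 2 ≤ d * K := by
    rw [hV, div_le_iff₀ hdr] at g2; linarith
  set lam := ε / (4 * K) with hlam
  have hlam0 : 0 < lam := by positivity
  have hlu : ∀ i, |lam * u i| ≤ 1 := by
    intro i
    rw [abs_of_nonneg (mul_nonneg hlam0.le (hu0 i)), hlam, div_mul_eq_mul_div, div_le_one (by positivity)]
    exact (mul_le_mul_of_nonneg_left (huM i) hε.le).trans hKM
  have b1 := bern hd k hk u K lam (lam * (k * (1 + ε / 2))) hlu hV'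
  have b2 := bern hd k hk u K (-lam) (-lam * (k * (1 - ε)))
    (fun i => by rw [neg_mul, abs_neg]; exact hlu i) hV'
  have el : lam ^ 2 * K - lam * (ε / 2) = - (ε ^ 2 / (16 * K)) := by
    rw [hlam]; field_simp; ring
  have ex1 : Real.exp (k * (lam * ((∑ i, u i) / d) + lam ^ 2 * K) - lam * (k * (1 + ε / 2))) ≤
      Real.exp (-(k * ε ^ 2 / (16 * K))) := by
    apply Real.exp_le_exp.mpr
    rw [huu]
    have : -(k * ε ^ 2 / (16 * K)) = k * (lam ^ 2 * K - lam * (ε / 2)) := by rw [el]; ring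
    rw [this]
    linarith [mul_nonneg (mul_nonneg hkr.le hlam0.le) hbb0]
  have ex2 : Real.exp (k * (-lam * ((∑ i, u i) / d) + (-lam) ^ 2 * K) - -lam * (k * (1 - ε))) ≤
      Real.exp (-(k * ε ^ 2 / (16 * K))) := by
    apply Real.exp_le_exp.mpr
    rw [huu]
    have : -(k * ε ^ 2 / (16 * K)) = k * (lam ^ 2 * K - lam * (ε / 2)) := by rw [el]; ring
    rw [this]
    linarith [mul_nonneg (mul_nonneg hkr.le hlam0.le) (sub_nonneg.mpr g1)]
  have b1' := b1.trans (mul_le_mul_of_nonneg_left ex1 hC)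
  have b2' := b2.trans (mul_le_mul_of_nonneg_left ex2 hC)
  have main : ∑ S ∈ (Finset.univ : Finset (Fin d)).powersetCard k,
      (if ∑ i ∈ S, x i ^ 2 ∉ Set.Icc ((1 - ε) * k / d) ((1 + ε) * k / d) then (1:ℝ) else 0) ≤
      ∑ S ∈ (Finset.univ : Finset (Fin d)).powersetCard k,
        (if lam * (k * (1 + ε / 2)) ≤ lam * ∑ i ∈ S, u i then (1:ℝ) else 0) +
      ∑ S ∈ (Finset.univ : Finset (Fin d)).powersetCard k,
        (if -lam * (k * (1 - ε)) ≤ -lam * ∑ i ∈ S, u i then (1:ℝ) else 0) +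
      ∑ S ∈ (Finset.univ : Finset (Fin d)).powersetCard k,
        ((∑ i ∈ S, b i) / (k * (ε / 2))) ^ P := by
    rw [← Finset.sum_add_distrib, ← Finset.sum_add_distrib]
    apply Finset.sum_le_sum
    intro S _
    have sb0 : 0 ≤ ∑ i ∈ S, b i := Finset.sum_nonneg fun i _ => hb0 i
    have m3 : 0 ≤ ((∑ i ∈ S, b i) / (k * (ε / 2))) ^ P := by positivity
    have m1 : ∀ p : Prop, ∀ _ : Decidable p, (0:ℝ) ≤ if p then (1:ℝ) else 0 := by
      intro p _; split_ifs <;> norm_num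
    have hs : ∑ i ∈ S, u i + ∑ i ∈ S, b i = d * ∑ i ∈ S, x i ^ 2 := by
      rw [← Finset.sum_add_distrib, Finset.sum_congr rfl (fun i _ => hub i), ← Finset.mul_sum]
    by_cases c1 : k * (1 + ε / 2) ≤ ∑ i ∈ S, u i
    · have c1' : lam * (k * (1 + ε / 2)) ≤ lam * ∑ i ∈ S, u i := mul_le_mul_of_nonneg_left c1 hlam0.le
      have := m1 (-lam * (k * (1 - ε)) ≤ -lam * ∑ i ∈ S, u i) inferInstance
      rw [if_pos c1']
      have : (if ∑ i ∈ S, x i ^ 2 ∉ Set.Icc ((1 - ε) * k / d) ((1 + ε) * k / d) then (1:ℝ) else 0) ≤ 1 := by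
        split_ifs <;> norm_num
      linarith
    by_cases c2 : ∑ i ∈ S, u i ≤ k * (1 - ε)
    · have c2' : -lam * (k * (1 - ε)) ≤ -lam * ∑ i ∈ S, u i := by
        rw [neg_mul, neg_mul, neg_le_neg_iff]; exact mul_le_mul_of_nonneg_left c2 hlam0.le
      have := m1 (lam * (k * (1 + ε / 2)) ≤ lam * ∑ i ∈ S, u i) inferInstance
      rw [if_pos c2']
      have : (if ∑ i ∈ S, x i ^ 2 ∉ Set.Icc ((1 - ε) * k / d) ((1 + ε) * k / d) then (1:ℝ) else 0) ≤ 1 := by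
        split_ifs <;> norm_num
      linarith
    by_cases c3 : k * (ε / 2) < ∑ i ∈ S, b i
    · have := ind_le_pow (by positivity) P c3
      have := m1 (lam * (k * (1 + ε / 2)) ≤ lam * ∑ i ∈ S, u i) inferInstance
      have := m1 (-lam * (k * (1 - ε)) ≤ -lam * ∑ i ∈ S, u i) inferInstance
      have : (if ∑ i ∈ S, x i ^ 2 ∉ Set.Icc ((1 - ε) * k / d) ((1 + ε) * k / d) then (1:ℝ) else 0) ≤ 1 := by
        split_ifs <;> norm_num
      linarith
    push Not at c1 c2 c3
    have hin : ∑ i ∈ S, x i ^ 2 ∈ Set.Icc ((1 - ε) * k / d) ((1 + ε) * k / d) := by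
      constructor
      · rw [div_le_iff₀ hdr]; linarith
      · rw [le_div_iff₀ hdr]; linarith
    rw [if_neg (not_not_intro hin)]
    have := m1 (lam * (k * (1 + ε / 2)) ≤ lam * ∑ i ∈ S, u i) inferInstance
    have := m1 (-lam * (k * (1 - ε)) ≤ -lam * ∑ i ∈ S, u i) inferInstance
    linarith
  refine main.trans ?_
  have n5 := mul_nonneg hC n1
  have n6 := mul_nonneg hC n2
  linarith

end Pointwise
section Numeric
variable {d : ℕ}

lemma two_pow_aux1 (p : ℕ) (hp : 1 ≤ p) : (p + 1) * (p + 2) ≤ 3 * 2 ^ p := by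
  induction p, hp using Nat.le_induction with
  | base => norm_num
  | succ p hp ih =>
    rw [pow_succ]
    nlinarith

lemma two_pow_aux2 (p : ℕ) : p + 1 ≤ 2 ^ p := Nat.lt_two_pow_self

lemma mom_b (hd2 : 2 ≤ d) (t : ℕ) (x0 : Fin d → ℝ) (hx0 : ∑ l, x0 l ^ 2 = 1) (P : ℕ)
    (hd : 50 * (3 * P) ≤ d) (ht : 4 * d * ((3 * P : ℕ) * Real.log d) ≤ t) (M : ℝ) (hM : 0 < M)
    (S : Finset (Fin d)) :
    EW t x0 (fun x => ∑ σ : Equiv.Perm (Fin d), (∑ i ∈ S, max (d * x (σ i) ^ 2 - M) 0) ^ P) ≤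
      d.factorial * (P.factorial * 64 ^ P * Real.exp (768 * S.card / M ^ 2)) := by
  have h := mom_gen hd2 t x0 hx0 P 2 le_rfl hd ht (fun a => max (a - M) 0) (fun _ => 1 / M ^ 2)
    (768 / M ^ 2) 32 (1 / 2) (by positivity) (by norm_num) (by norm_num) le_rfl
    (fun a _ => le_max_right _ _) (fun _ => by positivity) ?_ ?_ S
  · refine h.trans (le_of_eq ?_)
    congr 3
    · norm_num
    · ring
  · intro a ha p hp
    rcases le_total a M with h | h
    · rw [max_eq_right (by linarith), zero_pow (by omega)]; positivity
    · rw [max_eq_left (by linarith)]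
      calc (a - M) ^ p ≤ a ^ p := by
            apply pow_le_pow_left₀ (by linarith); linarith
        _ = 1 * a ^ p := by ring
        _ ≤ (a / M) ^ 2 * a ^ p := by
            apply mul_le_mul_of_nonneg_right _ (by positivity)
            exact one_le_pow₀ ((one_le_div hM).mpr h)
        _ = _ := by rw [pow_add]; ring
  · intro p hp
    have h1 : (((p:ℝ) + 1) * (p + 2)) ≤ 3 * 2 ^ p := by exact_mod_cast two_pow_aux1 p hp
    have h2 : ((p + 2).factorial : ℝ) = (p + 2) * ((p + 1) * p.factorial) := by
      rw [Nat.factorial_succ, Nat.factorial_succ]; push_cast; ring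
    rw [h2, pow_add, show (32:ℝ) = 16 * 2 by norm_num, mul_pow]
    calc _ = 256 / M ^ 2 * 16 ^ p * p.factorial * (((p:ℝ) + 1) * (p + 2)) := by ring
      _ ≤ 256 / M ^ 2 * 16 ^ p * p.factorial * (3 * 2 ^ p) := by gcongr
      _ = _ := by ring

lemma mom_u (hd2 : 2 ≤ d) (t : ℕ) (x0 : Fin d → ℝ) (hx0 : ∑ l, x0 l ^ 2 = 1) (P : ℕ)
    (hd : 50 * (3 * P) ≤ d) (ht : 4 * d * ((3 * P : ℕ) * Real.log d) ≤ t) (M : ℝ) (hM : 0 < M)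
    (y : ℝ) (hy : 0 < y) (hy2 : 32 * M * y ≤ 1 / 2) (S : Finset (Fin d)) :
    EW t x0 (fun x => ∑ σ : Equiv.Perm (Fin d), (∑ i ∈ S, (min (d * x (σ i) ^ 2) M) ^ 2) ^ P) ≤
      d.factorial * (P.factorial * (1 / y) ^ P * Real.exp (1024 * S.card * y)) := by
  have h := mom_gen hd2 t x0 hx0 P 1 (by norm_num) hd ht (fun a => (min a M) ^ 2) (fun p => M ^ (p - 1))
    (16 / M) (32 * M) (32 * M * y) (by positivity) (by positivity) (by positivity) hy2
    (fun a _ => by positivity) (fun _ => by positivity) ?_ ?_ S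
  · refine h.trans (le_of_eq ?_)
    congr 3
    · congr 1; field_simp
    · field_simp; ring
  · intro a ha p hp
    obtain ⟨q, rfl⟩ : ∃ q, p = q + 1 := ⟨p - 1, by omega⟩
    have h0 : 0 ≤ min a M := le_min ha hM.le
    simp only [Nat.add_sub_cancel]
    calc ((min a M) ^ 2) ^ (q + 1) = (min a M) ^ q * (min a M) ^ (q + 1 + 1) := by ring
      _ ≤ M ^ q * a ^ (q + 1 + 1) := by
          apply mul_le_mul (pow_le_pow_left₀ h0 (min_le_right _ _) _)
            (pow_le_pow_left₀ h0 (min_le_left _ _) _) (by positivity) (by positivity)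
  · intro p hp
    obtain ⟨q, rfl⟩ : ∃ q, p = q + 1 := ⟨p - 1, by omega⟩
    simp only [Nat.add_sub_cancel]
    have h1 : (((q + 1 : ℕ):ℝ) + 1) ≤ 2 ^ (q + 1) := by exact_mod_cast two_pow_aux2 (q + 1)
    rw [Nat.factorial_succ (q + 1), mul_pow, show (32:ℝ) = 16 * 2 by norm_num, mul_pow]
    push_cast
    push_cast at h1
    have e1 : 16 / M * (16 ^ (q + 1) * 2 ^ (q + 1) * M ^ (q + 1) * ((q + 1).factorial : ℝ)) =
        M ^ q * 16 ^ (q + 1 + 1) * (q + 1).factorial * 2 ^ (q + 1) := by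
      rw [pow_succ M]; field_simp; ring
    rw [e1]
    calc _ = M ^ q * 16 ^ (q + 1 + 1) * (q + 1).factorial * ((q:ℝ) + 1 + 1) := by ring
      _ ≤ _ := by gcongr

set_option maxHeartbeats 2000000 in
open Classical in
lemma walk_bound (n : ℕ) (hn : 2 ≤ n) (ε : ℝ) (hε : 0 < ε) (hε1 : ε < 1) (x0 : Fin d → ℝ)
    (hx0 : ∑ l, x0 l ^ 2 = 1) (t : ℕ) (ht : 150 * d * Real.log d * Real.log n ≤ t) (k : ℕ)
    (hk : k = ⌈(10:ℝ) ^ 6 * ε⁻¹ ^ 2 * Real.log n⌉₊) (hkd : k ≤ d) :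
    EW t x0 (fun x => ∑ S ∈ (Finset.univ : Finset (Fin d)).powersetCard k,
      (if ∑ i ∈ S, x i ^ 2 ∉ Set.Icc ((1 - ε) * k / d) ((1 + ε) * k / d) then (1:ℝ) else 0)) ≤
      d.choose k * (5 * Real.exp (- (6 * Real.log n))) := by
  set L := Real.log n with hL
  have hL2 : 1 / 2 ≤ L := by
    have h1 : Real.log 2 ≤ L := Real.log_le_log (by norm_num) (by exact_mod_cast hn)
    have := Real.log_two_gt_d9
    linarith
  have hL0 : 0 < L := by linarith
  set P := ⌈10 * L⌉₊ with hP
  have hP1 : 10 * L ≤ P := Nat.le_ceil _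
  have hP2 : (P:ℝ) ≤ 12 * L := by
    have := Nat.ceil_lt_add_one (a := 10 * L) (by positivity)
    linarith
  have hk1 : (10:ℝ) ^ 6 * ε⁻¹ ^ 2 * L ≤ k := by rw [hk]; exact Nat.le_ceil _
  have hk2 : (k:ℝ) ≤ (10:ℝ) ^ 6 * ε⁻¹ ^ 2 * L + 1 := by
    rw [hk]; exact (Nat.ceil_lt_add_one (by positivity)).le
  have hkε : (10:ℝ) ^ 6 * L ≤ k * ε ^ 2 := by
    have := mul_le_mul_of_nonneg_right hk1 (sq_nonneg ε)
    calc (10:ℝ) ^ 6 * L = (10:ℝ) ^ 6 * ε⁻¹ ^ 2 * L * ε ^ 2 := by field_simp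
      _ ≤ _ := this
  have hkε2 : k * ε ^ 2 ≤ 2 * (10:ℝ) ^ 6 * L := by
    have h1 := mul_le_mul_of_nonneg_right hk2 (sq_nonneg ε)
    have h2 : ((10:ℝ) ^ 6 * ε⁻¹ ^ 2 * L + 1) * ε ^ 2 = (10:ℝ) ^ 6 * L + ε ^ 2 := by field_simp
    rw [h2] at h1
    have : ε ^ 2 ≤ 1 := pow_le_one₀ hε.le hε1.le
    nlinarith
  have hk0r : (0:ℝ) < k := lt_of_lt_of_le (by positivity) hk1
  have hk0 : 0 < k := by exact_mod_cast hk0r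
  have hkε1 : (10:ℝ) ^ 6 * L ≤ k * ε := by
    refine hkε.trans ?_
    apply mul_le_mul_of_nonneg_left _ hk0r.le
    nlinarith
  have hkL : (10:ℝ) ^ 6 * L ≤ k := by nlinarith
  have hkdr : (k:ℝ) ≤ d := by exact_mod_cast hkd
  have hdP : 50 * (3 * P) ≤ d := by
    have : (50:ℝ) * (3 * P) ≤ d := by linarith
    exact_mod_cast this
  have hd2 : 2 ≤ d := by
    have : (2:ℝ) ≤ d := by linarith
    exact_mod_cast this
  have hdr : (2:ℝ) ≤ d := by exact_mod_cast hd2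
  have hlogd : 0 ≤ Real.log d := Real.log_nonneg (by linarith)
  have htP : 4 * d * ((3 * P : ℕ) * Real.log d) ≤ t := by
    refine le_trans ?_ ht
    push_cast
    have : (P:ℝ) * (d * Real.log d) ≤ 12 * L * (d * Real.log d) := by gcongr
    nlinarith [mul_nonneg hL0.le (mul_nonneg (by linarith : (0:ℝ) ≤ d) hlogd)]
  have hPr : (0:ℝ) < P := by linarith
  have hPf : (P.factorial : ℝ) ≤ (P:ℝ) ^ P := by exact_mod_cast Nat.factorial_le_pow P
  set M : ℝ := 40000 / ε with hM
  have hM0 : 0 < M := by positivity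
  set y : ℝ := 8 * P / ((10:ℝ) ^ 4 * k) with hy
  have hy0 : 0 < y := by positivity
  have hyM : 32 * M * y ≤ 1 / 2 := by
    have : 32 * M * y = 1024 * P / (k * ε) := by rw [hM, hy]; field_simp; norm_num
    rw [this, div_le_iff₀ (by positivity)]
    linarith
  -- the three moment bounds
  set B3 : ℝ := P.factorial * 64 ^ P * Real.exp (768 * k / M ^ 2) with hB3
  set B2 : ℝ := P.factorial * (1 / y) ^ P * Real.exp (1024 * k * y) with hB2
  have m3 : EW t x0 (fun x => ∑ S ∈ (Finset.univ : Finset (Fin d)).powersetCard k,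
      (∑ i ∈ S, max (d * x i ^ 2 - M) 0) ^ P) ≤ d.choose k * B3 := by
    apply mom_subsets t x0 (fun a => max (a - M) 0) k P B3
    intro S hS
    have := mom_b hd2 t x0 hx0 P hdP htP M hM0 S
    rw [hS] at this; exact this
  have m1 : EW t x0 (fun x => (k * ((∑ i, max (d * x i ^ 2 - M) 0) / d)) ^ P) ≤ B3 := by
    apply mom_mean hd2 t x0 hx0 (fun a => max (a - M) 0) (fun a _ => le_max_right _ _) k P hkd B3
    intro S hS
    have := mom_b hd2 t x0 hx0 P hdP htP M hM0 S
    rw [hS] at this; exact this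
  have m2 : EW t x0 (fun x => (k * ((∑ i, (min (d * x i ^ 2) M) ^ 2) / d)) ^ P) ≤ B2 := by
    apply mom_mean hd2 t x0 hx0 (fun a => (min a M) ^ 2) (fun a _ => by positivity) k P hkd B2
    intro S hS
    have := mom_u hd2 t x0 hx0 P hdP htP M hM0 y hy0 hyM S
    rw [hS] at this; exact this
  -- numerics
  have he1 : Real.exp 1 ≤ 2.7182818286 := Real.exp_one_lt_d9.le
  have n3 : (1 / (k * (ε / 2))) ^ P * B3 ≤ Real.exp (- (6 * L)) := by
    have q1 : 768 * k / M ^ 2 ≤ L := by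
      have : 768 * k / M ^ 2 = 768 * (k * ε ^ 2) / 1600000000 := by rw [hM]; field_simp; norm_num
      rw [this, div_le_iff₀ (by norm_num)]; linarith
    have q2 : P * 128 / (k * ε) ≤ Real.exp (-1) := by
      rw [Real.exp_neg, ← one_div, div_le_div_iff₀ (by positivity) (by positivity)]
      have : (P:ℝ) * 128 * Real.exp 1 ≤ P * 128 * 3 := by gcongr; linarith
      linarith
    calc (1 / (k * (ε / 2))) ^ P * B3 ≤
          (1 / (k * (ε / 2))) ^ P * ((P:ℝ) ^ P * 64 ^ P * Real.exp L) := by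
          rw [hB3]; gcongr
      _ = (P * 128 / (k * ε)) ^ P * Real.exp L := by
          rw [← mul_pow, ← mul_assoc, ← mul_pow]; congr 2; field_simp; norm_num
      _ ≤ Real.exp (-1) ^ P * Real.exp L := by gcongr
      _ = Real.exp (- P + L) := by rw [← Real.exp_nat_mul, ← Real.exp_add]; congr 1; ring
      _ ≤ _ := by apply Real.exp_le_exp.mpr; linarith
  have n2 : (1 / (k * (10:ℝ) ^ 4)) ^ P * B2 ≤ Real.exp (- (6 * L)) := by
    have q1 : 1024 * k * y = 8192 / 10000 * P := by rw [hy]; field_simp; norm_num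
    have q2 : (1:ℝ) / 8 ≤ Real.exp (-2) := by
      rw [Real.exp_neg, ← one_div]
      apply one_div_le_one_div_of_le (by positivity)
      rw [show (2:ℝ) = 1 + 1 by norm_num, Real.exp_add]
      nlinarith [Real.exp_pos 1]
    calc (1 / (k * (10:ℝ) ^ 4)) ^ P * B2 ≤
          (1 / (k * (10:ℝ) ^ 4)) ^ P * ((P:ℝ) ^ P * (1 / y) ^ P * Real.exp (8192 / 10000 * P)) := by
          rw [hB2, q1]; gcongr
      _ = (1 / 8) ^ P * Real.exp (8192 / 10000 * P) := by
          rw [← mul_pow, ← mul_assoc, ← mul_pow]; congr 2; rw [hy]; field_simp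
      _ ≤ Real.exp (-2) ^ P * Real.exp (8192 / 10000 * P) := by gcongr
      _ = Real.exp (- 2 * P + 8192 / 10000 * P) := by
          rw [← Real.exp_nat_mul, ← Real.exp_add]; congr 1; ring
      _ ≤ _ := by apply Real.exp_le_exp.mpr; linarith
  have n0 : Real.exp (-(k * ε ^ 2 / (16 * (10:ℝ) ^ 4))) ≤ Real.exp (- (6 * L)) := by
    apply Real.exp_le_exp.mpr
    rw [neg_le_neg_iff, le_div_iff₀ (by norm_num)]
    linarith
  -- assemble
  have hpt : EW t x0 (fun x => ∑ S ∈ (Finset.univ : Finset (Fin d)).powersetCard k,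
      (if ∑ i ∈ S, x i ^ 2 ∉ Set.Icc ((1 - ε) * k / d) ((1 + ε) * k / d) then (1:ℝ) else 0)) ≤ _ :=
    EW_mono hd2 t x0 hx0 _ _ fun x hx => pt_bound (by omega) k hk0 hkd ε M ((10:ℝ) ^ 4) hε hM0 (by norm_num)
      (by rw [hM]; field_simp; norm_num) P x hx
  refine hpt.trans ?_
  rw [EW_add, EW_mul, EW_add, EW_add, EW_const hd2, EW_mul, EW_mul, EW_mul]
  have hC : (0:ℝ) ≤ d.choose k := by positivity
  have p2 := (mul_le_mul_of_nonneg_left m2 (by positivity : 0 ≤ (1 / (k * (10:ℝ) ^ 4)) ^ P)).trans n2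
  have p1 := (mul_le_mul_of_nonneg_left m1 (by positivity : 0 ≤ (1 / (k * (ε / 2))) ^ P)).trans n3
  have p3 := mul_le_mul_of_nonneg_left m3 (by positivity : 0 ≤ (1 / (k * (ε / 2))) ^ P)
  have p3' := mul_le_mul_of_nonneg_left n3 hC
  have p4 := mul_le_mul_of_nonneg_left (add_le_add (add_le_add (mul_le_mul_of_nonneg_left n0 zero_le_two) p2) p1) hC
  calc _ ≤ _ := add_le_add p4 p3
    _ ≤ _ := by linarith

end Numeric
section Meas
variable {d : ℕ}

instance finsetMSC {α : Type*} : MeasurableSingletonClass (Finset α) := ⟨fun _ => trivial⟩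

lemma pair_fin (hd : 2 ≤ d) : IsFiniteMeasure (pairUniform d) := by
  unfold pairUniform
  apply Measure.smul_finite
  rw [ENNReal.inv_ne_top]
  have : d * (d - 1) ≠ 0 := by
    apply Nat.mul_ne_zero <;> omega
  exact_mod_cast this

lemma subset_fin (k : ℕ) (hk : k ≤ d) : IsFiniteMeasure (subsetUniform d k) := by
  unfold subsetUniform
  apply Measure.smul_finite
  rw [ENNReal.inv_ne_top]
  have := Nat.choose_pos hk
  exact_mod_cast this.ne'

lemma pair_sing (hd : 2 ≤ d) (p : Fin d × Fin d) : pairUniform d {p} =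
    ENNReal.ofReal (if p.1 ≠ p.2 then ((d:ℝ) * (d - 1))⁻¹ else 0) := by
  unfold pairUniform
  rw [Measure.smul_apply, Measure.restrict_apply (measurableSet_singleton p)]
  have hpos : (0:ℝ) < ((d * (d - 1) : ℕ) : ℝ) := by
    have : 0 < d * (d - 1) := Nat.mul_pos (by omega) (by omega)
    exact_mod_cast this
  have e : ((d:ℝ) * (d - 1)) = ((d * (d - 1) : ℕ) : ℝ) := by
    rw [Nat.cast_mul, Nat.cast_sub (by omega)]; simp
  split_ifs with h
  · rw [Set.inter_eq_left.mpr (by simpa using h), Measure.count_singleton, e,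
      ENNReal.ofReal_inv_of_pos hpos, ENNReal.ofReal_natCast]
    simp
  · have : ({p} ∩ {p : Fin d × Fin d | p.1 ≠ p.2} : Set (Fin d × Fin d)) = ∅ := by
      ext q; simp; rintro rfl; simpa using h
    rw [this]; simp

lemma subset_sing (k : ℕ) (hk : k ≤ d) (S : Finset (Fin d)) : subsetUniform d k {S} =
    ENNReal.ofReal (if S.card = k then ((d.choose k : ℝ))⁻¹ else 0) := by
  unfold subsetUniform
  rw [Measure.smul_apply, Measure.restrict_apply (measurableSet_singleton S)]
  have hpos : (0:ℝ) < (d.choose k : ℝ) := by exact_mod_cast Nat.choose_pos hk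
  split_ifs with h
  · rw [Set.inter_eq_left.mpr (by simpa using h), Measure.count_singleton,
      ENNReal.ofReal_inv_of_pos hpos, ENNReal.ofReal_natCast]
    simp
  · have : ({S} ∩ {A : Finset (Fin d) | A.card = k} : Set (Finset (Fin d))) = ∅ := by
      ext q; simp; rintro rfl; simpa using h
    rw [this]; simp

lemma nu_nonneg (hd : 2 ≤ d) {t : ℕ} (ω : Fin t → Fin d × Fin d) : 0 ≤ nu ω := by
  apply Finset.prod_nonneg
  intro s _
  have : (2:ℝ) ≤ d := by exact_mod_cast hd
  have : (0:ℝ) ≤ (d:ℝ) - 1 := by linarith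
  split_ifs <;> positivity

open Classical in
lemma meas_eq (hd : 2 ≤ d) (k : ℕ) (hk : k ≤ d) (t : ℕ) (x0 : Fin d → ℝ)
    (bad : (Fin d → ℝ) → Finset (Fin d) → Prop) :
    ((Measure.pi fun _ : Fin t => pairUniform d).prod (subsetUniform d k))
          {z : (Fin t → Fin d × Fin d) × Finset (Fin d) | bad ((oraMatrix z.1).mulVec x0) z.2} =
      ENNReal.ofReal ((d.choose k : ℝ)⁻¹ * EW t x0 (fun x =>
        ∑ S ∈ (Finset.univ : Finset (Fin d)).powersetCard k, if bad x S then (1:ℝ) else 0)) := by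
  have := pair_fin hd
  have := subset_fin k hk
  set μ := (Measure.pi fun _ : Fin t => pairUniform d).prod (subsetUniform d k) with hμ
  have hset : {z : (Fin t → Fin d × Fin d) × Finset (Fin d) | bad ((oraMatrix z.1).mulVec x0) z.2} =
      ((Finset.univ.filter fun z : (Fin t → Fin d × Fin d) × Finset (Fin d) =>
        bad ((oraMatrix z.1).mulVec x0) z.2 : Finset _) : Set _) := by
    ext z; simp
  have hs : ∀ ω S, μ {((ω, S) : (Fin t → Fin d × Fin d) × Finset (Fin d))} =
      ENNReal.ofReal (nu ω * (if S.card = k then ((d.choose k : ℝ))⁻¹ else 0)) := by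
    intro ω S
    rw [hμ, ← Set.singleton_prod_singleton, Measure.prod_prod, Measure.pi_singleton, subset_sing k hk,
      ENNReal.ofReal_mul (nu_nonneg hd ω)]
    congr 1
    unfold nu
    rw [ENNReal.ofReal_prod_of_nonneg]
    · exact Finset.prod_congr rfl fun s _ => pair_sing hd _
    · intro s _
      have : (2:ℝ) ≤ d := by exact_mod_cast hd
      have : (0:ℝ) ≤ (d:ℝ) - 1 := by linarith
      split_ifs <;> positivity
  rw [hset, ← sum_measure_singleton, Finset.sum_filter, Fintype.sum_prod_type]
  have hnn : ∀ ω : Fin t → Fin d × Fin d, ∀ S : Finset (Fin d),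
      0 ≤ (if bad ((oraMatrix ω).mulVec x0) S then
        nu ω * (if S.card = k then ((d.choose k : ℝ))⁻¹ else 0) else 0) := by
    intro ω S
    have := nu_nonneg hd ω
    split_ifs <;> positivity
  have h1 : ∀ ω : Fin t → Fin d × Fin d, ∀ S : Finset (Fin d),
      (if bad ((oraMatrix ω).mulVec x0) S then μ {(ω, S)} else 0) =
      ENNReal.ofReal (if bad ((oraMatrix ω).mulVec x0) S then
        nu ω * (if S.card = k then ((d.choose k : ℝ))⁻¹ else 0) else 0) := by
    intro ω S
    rw [hs]
    split_ifs <;> simp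
  simp only [h1]
  rw [Finset.sum_congr rfl fun ω _ =>
    (ENNReal.ofReal_sum_of_nonneg (fun S _ => hnn ω S)).symm,
    ← ENNReal.ofReal_sum_of_nonneg (fun ω _ => Finset.sum_nonneg fun S _ => hnn ω S)]
  congr 1
  unfold EW
  rw [Finset.mul_sum]
  apply Finset.sum_congr rfl
  intro ω _
  have h2 : (Finset.univ : Finset (Fin d)).powersetCard k = Finset.univ.filter fun S => S.card = k := by
    ext S; simp [Finset.mem_powersetCard]
  beta_reduce
  rw [h2, Finset.sum_filter, Finset.mul_sum, Finset.mul_sum]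
  apply Finset.sum_congr rfl
  intro S _
  split_ifs <;> ring

end Meas
/-- **Lemma 4.6**: after `C d (log d)(log n)` steps of orthogonal repeated averaging, the sum
of the squares of the coordinates of the image of a fixed unit vector along a uniformly
random `k`-element subset, with `k = ⌈C' ε⁻² log n⌉`, is `(1 ± ε) k/d` except with
probability `n⁻³`. -/
theorem ora_random_subset_concentration :
    ∃ C C' : ℝ, 0 < C ∧ 0 < C' ∧
      ∀ (n : ℕ), 2 ≤ n → ∀ ε : ℝ, 0 < ε → ε < 1 →
      ∀ (d : ℕ) (X₀ : Fin d → ℝ), (∑ i, X₀ i ^ 2 = 1) →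
      ∀ t : ℕ, C * d * Real.log d * Real.log n ≤ t →
      ∀ k : ℕ, k = ⌈C' * ε⁻¹ ^ 2 * Real.log n⌉₊ → k ≤ d →
      ((Measure.pi fun _ : Fin t => pairUniform d).prod (subsetUniform d k))
          {z : (Fin t → Fin d × Fin d) × Finset (Fin d) |
            ∑ i ∈ z.2, ((oraMatrix z.1).mulVec X₀ i) ^ 2 ∉
              Set.Icc ((1 - ε) * k / d) ((1 + ε) * k / d)} ≤
        (((n : ℝ≥0∞)) ^ 3)⁻¹ := by
  classical
  refine ⟨150, 10 ^ 6, by norm_num, by norm_num, ?_⟩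
  intro n hn ε hε hε1 d X₀ hX t ht k hk hkd
  have hnr : (2:ℝ) ≤ n := by exact_mod_cast hn
  have hL2 : 1 / 2 ≤ Real.log n := by
    have h1 : Real.log 2 ≤ Real.log n := Real.log_le_log (by norm_num) hnr
    have := Real.log_two_gt_d9
    linarith
  have hd2 : 2 ≤ d := by
    have h1 : (10:ℝ) ^ 6 * ε⁻¹ ^ 2 * Real.log n ≤ k := by rw [hk]; exact Nat.le_ceil _
    have h2 : (1:ℝ) ≤ ε⁻¹ ^ 2 := one_le_pow₀ ((one_le_inv₀ hε).mpr hε1.le)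
    have h3 : (1:ℝ) * (1 / 2) ≤ ε⁻¹ ^ 2 * Real.log n := mul_le_mul h2 hL2 (by norm_num) (by positivity)
    have h4 : (2:ℝ) ≤ k := by linarith
    have h5 : 2 ≤ k := by exact_mod_cast h4
    omega
  have hw := walk_bound n hn ε hε hε1 X₀ hX t ht k hk hkd
  have hC : (0:ℝ) < d.choose k := by exact_mod_cast Nat.choose_pos hkd
  rw [meas_eq hd2 k hkd t X₀ (fun x S => ∑ i ∈ S, x i ^ 2 ∉ Set.Icc ((1 - ε) * k / d) ((1 + ε) * k / d))]
  have e : (((n : ℝ≥0∞)) ^ 3)⁻¹ = ENNReal.ofReal (((n:ℝ) ^ 3)⁻¹) := by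
    rw [ENNReal.ofReal_inv_of_pos (by positivity), ENNReal.ofReal_pow (by positivity), ENNReal.ofReal_natCast]
  rw [e]
  apply ENNReal.ofReal_le_ofReal
  have h6 : Real.exp (- (6 * Real.log n)) = ((n:ℝ) ^ 3)⁻¹ * ((n:ℝ) ^ 3)⁻¹ := by
    rw [← mul_inv, ← pow_add, Real.exp_neg, mul_comm, Real.exp_mul, Real.exp_log (by linarith)]
    norm_num
  have h8 : (8:ℝ) ≤ (n:ℝ) ^ 3 := by
    calc (8:ℝ) = 2 ^ 3 := by norm_num
      _ ≤ (n:ℝ) ^ 3 := by gcongr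
  have hw2 := mul_le_mul_of_nonneg_left hw (by positivity : 0 ≤ (d.choose k : ℝ)⁻¹)
  refine le_trans (le_trans (le_of_eq (by congr!)) hw2) ?_
  calc (d.choose k : ℝ)⁻¹ * (d.choose k * (5 * Real.exp (- (6 * Real.log n))))
      = 5 * ((n:ℝ) ^ 3)⁻¹ * ((n:ℝ) ^ 3)⁻¹ := by rw [h6]; field_simp
    _ ≤ 1 * ((n:ℝ) ^ 3)⁻¹ := by
        apply mul_le_mul_of_nonneg_right _ (by positivity)
        rw [← div_eq_mul_inv, div_le_one (by positivity)]; linarith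
    _ = _ := one_mul _

end KacJL
end
end

section
/- Let d ≥ 1, let Z be a uniformly random point on the sphere S^{d−1}, let k ∈ {1,…,d}, and let ε ∈ (0,1). Then P[ | Σ_{i=1}^k Z[i]² − k/d | ≥ ε k / (2d) ] ≤ 2 exp(−ε² k / 64). -/
noncomputable section

open MeasureTheory Real ProbabilityTheory
open scoped ENNReal

namespace KacJL

/-- The Euclidean norm on `ℝ^d`. -/
def l2norm {d : ℕ} (x : Fin d → ℝ) : ℝ := Real.sqrt (∑ i, x i ^ 2)

/-- The uniform (rotation-invariant) probability measure on the unit sphere `S^{d-1}`,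
realized as the pushforward of the standard Gaussian measure on `ℝ^d` under radial
normalization. -/
def sphereUniform (d : ℕ) : Measure (Fin d → ℝ) :=
  Measure.map (fun x : Fin d → ℝ => (l2norm x)⁻¹ • x)
    (Measure.pi fun _ : Fin d => gaussianReal 0 1)

lemma inv_one_sub_le_exp {x : ℝ} (h1 : -(1/2) ≤ x) (h2 : x ≤ 1/2) :
    1 / (1 - x) ≤ Real.exp (x + x ^ 2) := by
  rw [div_le_iff₀ (by linarith)]
  rcases le_or_gt x 0 with hx | hx
  · have h := Real.add_one_le_exp (x + x ^ 2)
    nlinarith [mul_le_mul_of_nonneg_right h (by linarith : 0 ≤ 1 - x),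
      mul_nonneg (neg_nonneg.2 hx) (sq_nonneg x)]
  · have h := Real.quadratic_le_exp_of_nonneg (by positivity : 0 ≤ x + x ^ 2)
    have h3 := mul_le_mul_of_nonneg_right h (by linarith : 0 ≤ 1 - x)
    have hx2 : x ^ 2 ≤ 1/4 := by nlinarith
    have hx3 : x ^ 3 ≤ 1/8 := by nlinarith
    have h4 : 0 ≤ x ^ 2 * (1 - x - x ^ 2 - x ^ 3) :=
      mul_nonneg (sq_nonneg x) (by linarith)
    nlinarith

lemma lintegral_gauss {x : ℝ} (h1 : -(1/2) ≤ x) (h2 : x ≤ 1/2) :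
    ∫⁻ y, ENNReal.ofReal (Real.exp (x / 2 * y ^ 2)) ∂(gaussianReal 0 1) ≤
      ENNReal.ofReal (Real.exp ((x + x ^ 2) / 2)) := by
  rw [gaussianReal_of_var_ne_zero 0 one_ne_zero,
    lintegral_withDensity_eq_lintegral_mul _ (measurable_gaussianPDF _ _) (by fun_prop)]
  have hb : 0 < (1 - x) / 2 := by linarith
  have e : ∀ y : ℝ, (gaussianPDF 0 1 * fun y => ENNReal.ofReal (Real.exp (x / 2 * y ^ 2))) y =
      ENNReal.ofReal ((√(2 * π))⁻¹ * Real.exp (-((1 - x) / 2) * y ^ 2)) := by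
    intro y
    simp only [Pi.mul_apply, gaussianPDF, gaussianPDFReal]
    rw [← ENNReal.ofReal_mul (by positivity), mul_assoc, ← Real.exp_add]
    congr 2
    · simp
    · congr 1
      simp
      ring
  simp_rw [e]
  rw [← ofReal_integral_eq_lintegral_ofReal ((integrable_exp_neg_mul_sq hb).const_mul _)
    (ae_of_all _ fun y => by positivity)]
  apply ENNReal.ofReal_le_ofReal
  rw [integral_const_mul, integral_gaussian, ← Real.sqrt_inv, ← Real.sqrt_mul (by positivity),
    Real.exp_half]
  apply Real.sqrt_le_sqrt
  refine le_trans (le_of_eq ?_) (inv_one_sub_le_exp h1 h2)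
  have : (1 - x) ≠ 0 := by linarith
  field_simp

lemma lintegral_gauss_pi {d : ℕ} (c : Fin d → ℝ) (h1 : ∀ i, -(1/2) ≤ c i)
    (h2 : ∀ i, c i ≤ 1/2) :
    ∫⁻ y, ENNReal.ofReal (Real.exp (∑ i, c i / 2 * y i ^ 2))
        ∂(Measure.pi fun _ : Fin d => gaussianReal 0 1) ≤
      ENNReal.ofReal (Real.exp (∑ i, (c i + c i ^ 2) / 2)) := by
  simp_rw [Real.exp_sum]
  rw [ENNReal.ofReal_prod_of_nonneg (fun i _ => (Real.exp_pos _).le)]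
  have e : ∀ y : Fin d → ℝ, ENNReal.ofReal (∏ i, Real.exp (c i / 2 * y i ^ 2)) =
      ∏ i, ENNReal.ofReal (Real.exp (c i / 2 * y i ^ 2)) := fun y =>
    ENNReal.ofReal_prod_of_nonneg (fun i _ => (Real.exp_pos _).le)
  simp_rw [e]
  have hind : iIndepFun (fun (i : Fin d) (y : Fin d → ℝ) =>
      ENNReal.ofReal (Real.exp (c i / 2 * y i ^ 2)))
      (Measure.pi fun _ : Fin d => gaussianReal 0 1) :=
    iIndepFun_pi (μ := fun _ : Fin d => gaussianReal 0 1)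
      (X := fun i (t : ℝ) => ENNReal.ofReal (Real.exp (c i / 2 * t ^ 2)))
      (fun i => by fun_prop)
  rw [lintegral_prod_eq_prod_lintegral_of_indepFun _ _ hind (fun i => by fun_prop)]
  apply Finset.prod_le_prod' 
  intro i _
  refine le_trans (le_of_eq ?_) (lintegral_gauss (h1 i) (h2 i))
  exact (measurePreserving_eval (fun _ : Fin d => gaussianReal 0 1) i).lintegral_comp
    (f := fun t : ℝ => ENNReal.ofReal (Real.exp (c i / 2 * t ^ 2))) (by fun_prop)

/-- One-sided tail bound; the sign of `δ` selects the side. -/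
lemma tail_bound (d k : ℕ) (hd : 1 ≤ d) (hk₂ : k ≤ d) (δ : ℝ) (h1 : -(1/2) ≤ δ)
    (h2 : δ ≤ 1/2) :
    (Measure.pi fun _ : Fin d => gaussianReal 0 1) {x : Fin d → ℝ |
        0 ≤ δ * (∑ i ∈ Finset.univ.filter (fun i : Fin d => (i : ℕ) < k), x i ^ 2
          - (1 + δ) * (k / d) * ∑ i, x i ^ 2)} ≤
      ENNReal.ofReal (Real.exp (-(δ ^ 2 * k) / 8)) := by
  have hd0 : (0 : ℝ) < d := by exact_mod_cast hd
  obtain ⟨p, hp⟩ : ∃ p : ℝ, p = k / d := ⟨_, rfl⟩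
  have hp0 : 0 ≤ p := by rw [hp]; positivity
  have hp1 : p ≤ 1 := by
    rw [hp, div_le_one hd0]; exact_mod_cast hk₂
  have hkp : (k : ℝ) = p * d := by rw [hp]; field_simp
  rw [← hp]
  obtain ⟨a, ha⟩ : ∃ a : ℝ, a = (1 + δ) * p := ⟨_, rfl⟩
  have ha0 : 0 ≤ a := by rw [ha]; exact mul_nonneg (by linarith) hp0
  have ha1 : a ≤ 3/2 := by rw [ha]; nlinarith
  rw [← ha]
  let c : Fin d → ℝ := fun i => δ / 2 * ((if (i : ℕ) < k then 1 else 0) - a)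
  have hc : ∀ i, |c i| ≤ 1/2 := by
    intro i
    have hδ : |δ / 2| ≤ 1/4 := by rw [abs_le]; constructor <;> linarith
    have hb : |(if (i : ℕ) < k then (1:ℝ) else 0) - a| ≤ 3/2 := by
      rw [abs_le]; split_ifs <;> constructor <;> linarith
    simp only [c]
    rw [abs_mul]
    have := mul_le_mul hδ hb (abs_nonneg _) (by norm_num)
    linarith
  have hcard : ∑ i : Fin d, (if (i : ℕ) < k then (1:ℝ) else 0) = k := by
    rw [Fin.sum_univ_eq_sum_range (fun i => if i < k then (1:ℝ) else 0) d,
      ← Finset.sum_filter]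
    have : (Finset.range d).filter (fun i => i < k) = Finset.range k := by
      ext i; simp; omega
    rw [this]; simp
  have hmain := lintegral_gauss_pi c (fun i => (abs_le.1 (hc i)).1) (fun i => (abs_le.1 (hc i)).2)
  have hsum : ∑ i, (c i + c i ^ 2) / 2 ≤ -(δ ^ 2 * k) / 8 := by
    have e : ∀ i, (c i + c i ^ 2) / 2 =
        (δ / 4 + δ ^ 2 / 8 * (1 - 2 * a)) * (if (i : ℕ) < k then (1:ℝ) else 0)
          + (δ ^ 2 / 8 * a ^ 2 - δ / 4 * a) := by
      intro i
      simp only [c]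
      split_ifs <;> ring
    simp_rw [e]
    rw [Finset.sum_add_distrib, ← Finset.mul_sum, hcard]
    simp only [Finset.sum_const, Finset.card_univ, Fintype.card_fin, nsmul_eq_mul]
    rw [hkp, ha]
    have h5 : 0 ≤ δ ^ 2 / 8 * d * (p * p * ((1 + δ) * (1 - δ))) := by
      have : 0 ≤ 1 + δ := by linarith
      have : 0 ≤ 1 - δ := by linarith
      positivity
    nlinarith
  refine le_trans ?_ (hmain.trans (ENNReal.ofReal_le_ofReal (Real.exp_le_exp.2 hsum)))
  have hm : Measurable (fun y : Fin d → ℝ => ENNReal.ofReal (Real.exp (∑ i, c i / 2 * y i ^ 2))) := by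
    clear_value c
    fun_prop
  apply meas_le_lintegral₀ hm.aemeasurable
  intro x hx
  have e : ∑ i, c i / 2 * x i ^ 2 =
      1 / 4 * (δ * (∑ i ∈ Finset.univ.filter (fun i : Fin d => (i : ℕ) < k), x i ^ 2
          - a * ∑ i, x i ^ 2)) := by
    rw [Finset.sum_filter, Finset.mul_sum, ← Finset.sum_sub_distrib, Finset.mul_sum,
      Finset.mul_sum]
    refine Finset.sum_congr rfl fun i _ => ?_
    simp only [c]
    split_ifs <;> ring
  have hx' := Set.mem_ofPred_eq ▸ hx
  rw [e, ENNReal.one_le_ofReal]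
  exact Real.one_le_exp (mul_nonneg (by norm_num) hx')

/-- Concentration of the sum of squares of the first `k` coordinates of a uniformly random
point on the sphere `S^{d-1}`. -/
theorem sphere_first_coords_concentration
    (d : ℕ) (hd : 1 ≤ d) (k : ℕ) (hk₁ : 1 ≤ k) (hk₂ : k ≤ d)
    (ε : ℝ) (hε₁ : 0 < ε) (hε₂ : ε < 1) :
    sphereUniform d {z : Fin d → ℝ |
        ε * k / (2 * d) ≤
          |∑ i ∈ Finset.univ.filter (fun i : Fin d => (i : ℕ) < k), z i ^ 2 - (k : ℝ) / d|} ≤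
      ENNReal.ofReal (2 * Real.exp (-(ε ^ 2 * k) / 64)) := by
  have hd0 : (0 : ℝ) < d := by exact_mod_cast hd
  have hk0 : (0 : ℝ) < k := by exact_mod_cast hk₁
  have hmeas : Measurable (fun x : Fin d → ℝ => (l2norm x)⁻¹ • x) := by
    unfold l2norm
    fun_prop
  rw [sphereUniform, Measure.map_apply hmeas (measurableSet_le (by fun_prop) (by fun_prop))]
  have hA := tail_bound d k hd hk₂ (ε / 2) (by linarith) (by linarith)
  have hB := tail_bound d k hd hk₂ (-(ε / 2)) (by linarith) (by linarith)
  refine le_trans (measure_mono (t := _ ∪ _) ?_) ((measure_union_le _ _).trans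
    ((add_le_add hA hB).trans ?_))
  · intro x hx
    simp only [Set.mem_preimage, Set.mem_ofPred_eq, Pi.smul_apply, smul_eq_mul, mul_pow] at hx
    rw [← Finset.mul_sum] at hx
    simp only [Set.mem_union, Set.mem_ofPred_eq]
    set S := ∑ i ∈ Finset.univ.filter (fun i : Fin d => (i : ℕ) < k), x i ^ 2 with hS
    have hT0 : 0 ≤ ∑ i, x i ^ 2 := Finset.sum_nonneg fun i _ => sq_nonneg _
    have hST : S ≤ ∑ i, x i ^ 2 :=
      Finset.sum_le_sum_of_subset_of_nonneg (Finset.filter_subset _ _) fun i _ _ => sq_nonneg _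
    have hS0 : 0 ≤ S := Finset.sum_nonneg fun i _ => sq_nonneg _
    have hl : (l2norm x)⁻¹ ^ 2 = (∑ i, x i ^ 2)⁻¹ := by
      rw [l2norm, inv_pow, Real.sq_sqrt hT0]
    rw [hl] at hx
    set T := ∑ i, x i ^ 2 with hT
    rcases hT0.eq_or_lt with h0 | h0
    · left
      have : S = 0 := by linarith
      rw [this, ← h0]; simp
    · have e1 : ε * k / (2 * d) = ε / 2 * (k / d) := by field_simp
      rw [e1] at hx
      rcases le_abs.1 hx with h | h
      · left
        apply mul_nonneg (by linarith)
        have h' : (1 + ε / 2) * (k / d) ≤ T⁻¹ * S := by linarith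
        have := mul_le_mul_of_nonneg_right h' h0.le
        have e2 : T⁻¹ * S * T = S := by field_simp
        linarith
      · right
        apply mul_nonneg_of_nonpos_of_nonpos (by linarith)
        have h' : T⁻¹ * S ≤ (1 + -(ε / 2)) * (k / d) := by linarith
        have := mul_le_mul_of_nonneg_right h' h0.le
        have e2 : T⁻¹ * S * T = S := by field_simp
        linarith
  · rw [← ENNReal.ofReal_add (Real.exp_pos _).le (Real.exp_pos _).le]
    apply ENNReal.ofReal_le_ofReal
    have hpos : 0 ≤ ε ^ 2 * k := by positivity
    have h1 : Real.exp (-((ε / 2) ^ 2 * k) / 8) ≤ Real.exp (-(ε ^ 2 * k) / 64) :=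
      Real.exp_le_exp.2 (by nlinarith)
    have h2 : Real.exp (-((-(ε / 2)) ^ 2 * k) / 8) ≤ Real.exp (-(ε ^ 2 * k) / 64) :=
      Real.exp_le_exp.2 (by nlinarith)
    linarith

end KacJL
end
end
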